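/- Let the input be a centered stationary Gaussian process {X_{j,k}} with absolutely continuous spectral measure of density f(x,y) = 1(−π/2 ≤ x ≤ π/2, −π/2 ≤ y ≤ π/2) on [−π,π]². Then μ_f is the law of 2π·B·W, where B and W are independent, B is Bernoulli(1/2) (taking values 0 and 1 with probability 1/2 each) and W has the Wigner semicircle law WSL(1); equivalently, μ_f = (1/2)δ_0 + (1/2)·WSL(4π²). In particular the limiting spectral distribution is not a continuous probability measure. -/

import Mathlib

open MeasureTheory ProbabilityTheory Filter Real

noncomputable section

/-- The square `(-π, π]²` on which the spectral measure lives. -/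
def specBox : Set (ℝ × ℝ) := Set.Ioc (-π) π ×ˢ Set.Ioc (-π) π

/-- `(1/N) ∑_j g(λ_j(A))`, the integral of `g` against the empirical spectral
distribution of a symmetric `N × N` real matrix `A` (junk value `0` if `A` is
not symmetric). -/
def esdEval {N : ℕ} (A : Matrix (Fin N) (Fin N) ℝ) (g : ℝ → ℝ) : ℝ :=
  if hA : A.IsHermitian then (N : ℝ)⁻¹ * ∑ j, g (hA.eigenvalues j) else 0

/-- The (random) empirical spectral distributions of `A N` converge weakly in
probability to the probability measure `μ`: for every bounded continuous `g`,
`∫ g d(ESD(A N)) → ∫ g dμ` in probability. -/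
def ESDTendstoInProb {Ω : Type*} [MeasurableSpace Ω] (P : Measure Ω)
    (A : (N : ℕ) → Ω → Matrix (Fin N) (Fin N) ℝ) (μ : Measure ℝ) : Prop :=
  ∀ g : ℝ → ℝ, Continuous g → (∃ C, ∀ x, |g x| ≤ C) →
    ∀ ε > 0, Tendsto (fun N => P {ω | ε ≤ |esdEval (A N ω) g - ∫ x, g x ∂μ|})
      atTop (nhds 0)

/-- The symmetric matrix `W_N/√N`, where `W_N(i,j) = X_{i,j} + X_{j,i}`,
`1 ≤ i,j ≤ N`. -/
def scaledW {Ω : Type*} (X : ℤ → ℤ → Ω → ℝ) (N : ℕ) (ω : Ω) :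
    Matrix (Fin N) (Fin N) ℝ :=
  fun i j => (Real.sqrt N)⁻¹ *
    (X ((i : ℕ) + 1) ((j : ℕ) + 1) ω + X ((j : ℕ) + 1) ((i : ℕ) + 1) ω)

/-- A centered stationary Gaussian process indexed by `ℤ²` with positive
variance: every finite real linear combination is a centered Gaussian random
variable, and second moments are shift invariant. -/
structure StatGauss {Ω : Type*} [MeasurableSpace Ω] (P : Measure Ω)
    (X : ℤ → ℤ → Ω → ℝ) : Prop where
  meas : ∀ j k, Measurable (X j k)
  gauss : ∀ c : (ℤ × ℤ) →₀ ℝ, ∃ v : NNReal,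
    P.map (fun ω => ∑ p ∈ c.support, c p * X p.1 p.2 ω) = gaussianReal 0 v
  var_pos : 0 < ∫ ω, (X 0 0 ω) ^ 2 ∂P
  stat : ∀ j k u v : ℤ,
    ∫ ω, X j k ω * X (j + u) (k + v) ω ∂P = ∫ ω, X 0 0 ω * X u v ω ∂P

/-- The process `X` has absolutely continuous spectral measure with density
`h` on `(-π,π]²`: `E[X_{0,0} X_{u,v}] = ∫∫ e^{i(ux+vy)} h(x,y) dx dy`. -/
def HasSpecDensity {Ω : Type*} [MeasurableSpace Ω] (P : Measure Ω)
    (X : ℤ → ℤ → Ω → ℝ) (h : ℝ × ℝ → ℝ) : Prop :=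
  ∀ u v : ℤ,
    (∫ q in specBox,
        Complex.exp (Complex.I * ((u * q.1 + v * q.2 : ℝ) : ℂ)) * ((h q : ℝ) : ℂ))
      = ((∫ ω, X 0 0 ω * X u v ω ∂P : ℝ) : ℂ)

/-- The Wigner semicircle law with variance `γ`: the measure on `ℝ` with
density `(2π√γ)⁻¹ √(4 - x²/γ) 1(|x| ≤ 2√γ)`. -/
def WSL (γ : ℝ) : Measure ℝ :=
  volume.withDensity fun x => ENNReal.ofReal
    (if |x| ≤ 2 * Real.sqrt γ then
      (2 * π * Real.sqrt γ)⁻¹ * Real.sqrt (4 - x ^ 2 / γ) else 0)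

lemma stein1 (v : NNReal) (hv : v ≠ 0) (F F' : ℝ → ℂ) (hF : ∀ s, HasDerivAt F (F' s) s)
    (C : ℝ) (hC : ∀ s, ‖F s‖ ≤ C) (hC' : ∀ s, ‖F' s‖ ≤ C) (hm' : Measurable F') :
    ∫ x, (x : ℂ) * F x ∂(gaussianReal 0 v) = (v : ℂ) * ∫ x, F' x ∂(gaussianReal 0 v) := by
  have hv0 : (v : ℝ) ≠ 0 := by exact_mod_cast hv
  have hvC : ((v : ℝ) : ℂ) ≠ 0 := by exact_mod_cast hv0
  have hFc : Continuous F := continuous_iff_continuousAt.2 fun s => (hF s).continuousAt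
  rw [integral_gaussianReal_eq_integral_smul hv, integral_gaussianReal_eq_integral_smul hv]
  set p := gaussianPDFReal 0 v with hp
  have hpd : ∀ x, HasDerivAt p (-(x / v) * p x) x := by
    intro x
    rw [hp, gaussianPDFReal_def]
    have h1 : HasDerivAt (fun x : ℝ => -(x - 0) ^ 2 / (2 * (v : ℝ))) (-(x / v)) x := by
      have := ((((hasDerivAt_id x).sub_const 0).pow 2).neg).div_const (2 * (v : ℝ))
      refine this.congr_deriv ?_
      simp
      field_simp
    refine (h1.exp.const_mul _).congr_deriv ?_
    ring
  have hpi : Integrable p := integrable_gaussianPDFReal 0 v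
  have hpx : Integrable (fun x => x * p x) := by
    have h := (memLp_id_gaussianReal (μ := 0) (v := v) 1)
    have h := memLp_one_iff_integrable.1 h
    rw [gaussianReal_of_var_ne_zero _ hv, integrable_withDensity_iff (measurable_gaussianPDF _ _)
      (by simp [gaussianPDF_lt_top])] at h
    simpa [toReal_gaussianPDF] using h
  have hpc : Integrable (fun x => ((p x : ℝ) : ℂ)) := hpi.ofReal
  have hpxc : Integrable (fun x => (((x * p x : ℝ)) : ℂ)) := hpx.ofReal
  have key := integral_mul_deriv_eq_deriv_mul_of_integrable (u := F) (u' := F')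
    (v := fun x => ((p x : ℝ) : ℂ)) (v' := fun x => ((-(x / v) * p x : ℝ) : ℂ))
    (fun x _ => hF x) (fun x _ => (hpd x).ofReal_comp) ?_ ?_ ?_
  · simp only [Complex.real_smul]
    have e1 : ∀ x : ℝ, ((p x : ℝ) : ℂ) * ((x : ℂ) * F x) =
        -(v : ℂ) * (F x * ((-(x / v) * p x : ℝ) : ℂ)) := by
      intro x; push_cast; field_simp
    simp_rw [e1]
    rw [integral_const_mul, key]
    have e2 : ∀ x : ℝ, ((p x : ℝ) : ℂ) * F' x = F' x * ((p x : ℝ) : ℂ) := fun x => mul_comm _ _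
    simp_rw [e2]
    ring
  · have : (F * fun x : ℝ => ((-(x / v) * p x : ℝ) : ℂ)) =
        fun x => F x * ((-(v : ℂ)⁻¹) * ((x * p x : ℝ) : ℂ)) := by
      ext x; simp only [Pi.mul_apply]; push_cast; field_simp
    rw [this]
    exact (hpxc.const_mul _).bdd_mul hFc.aestronglyMeasurable (ae_of_all _ hC)
  · exact hpc.bdd_mul hm'.aestronglyMeasurable (ae_of_all _ hC')
  · exact hpc.bdd_mul hFc.aestronglyMeasurable (ae_of_all _ hC)

lemma gauss_ibp {Ω ι : Type*} [MeasurableSpace Ω] [Fintype ι] (P : Measure Ω) [IsProbabilityMeasure P]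
    (x : ι → Ω → ℝ) (hxm : ∀ p, Measurable (x p)) (hG : HasGaussianLaw (fun ω p => x p ω) P)
    (h0 : ∀ p, ∫ ω, x p ω ∂P = 0) (a : ι) (c : ι → ℝ) (hc : ∀ p, ∫ ω, x a ω * x p ω ∂P = c p)
    (hca : 0 < c a) (F F' : (ι → ℝ) → ℂ) (hFc : Continuous F) (hFc' : Continuous F')
    (C : ℝ) (hC : ∀ s, ‖F s‖ ≤ C) (hC' : ∀ s, ‖F' s‖ ≤ C)
    (hd : ∀ y, HasDerivAt (fun s : ℝ => F (y + s • c)) (F' y) 0) :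
    ∫ ω, (x a ω : ℂ) * F (fun p => x p ω) ∂P = ∫ ω, F' (fun p => x p ω) ∂P := by
  classical
  set b : ℝ := c a with hb
  let V : ι → Ω → ℝ := fun p ω => x p ω - (c p / b) * x a ω
  let ξ : Unit → Ω → ℝ := fun _ ω => x a ω
  have hVm : ∀ p, Measurable (V p) := fun p => (hxm p).sub ((hxm a).const_mul _)
  have hL2 : ∀ p, MemLp (x p) 2 P := fun p => (hG.eval p).memLp_two
  have hjoint : HasGaussianLaw (fun ω => ((fun p => V p ω), (fun j => ξ j ω))) P := by
    let L1 : (ι → ℝ) →L[ℝ] (ι → ℝ) := ContinuousLinearMap.pi fun p =>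
      ContinuousLinearMap.proj p - (c p / b) • ContinuousLinearMap.proj a
    let L2 : (ι → ℝ) →L[ℝ] (Unit → ℝ) := ContinuousLinearMap.pi fun _ => ContinuousLinearMap.proj a
    exact (hG.map (L1.prod L2))
  have hind : IndepFun (fun ω p => V p ω) (fun ω j => ξ j ω) P := by
    refine hjoint.indepFun_of_covariance_eval fun p j => ?_
    have hV2 : MemLp (V p) 2 P := (hL2 p).sub ((hL2 a).const_mul _)
    rw [covariance_eq_sub hV2 (hL2 a)]
    have : ∫ ω, ξ j ω ∂P = 0 := h0 a
    rw [this, mul_zero, sub_zero]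
    have e : ∀ ω, (V p * ξ j) ω = x a ω * x p ω - (c p / b) * (x a ω * x a ω) := by
      intro ω; simp [V, ξ]; ring
    have hi : ∀ p, Integrable (fun ω => x a ω * x p ω) P := fun p => (hL2 a).integrable_mul (hL2 p)
    rw [integral_congr_ae (ae_of_all _ e)]
    rw [integral_sub (hi p) ((hi a).const_mul _),
      integral_const_mul, hc, hc]
    field_simp; ring
  have hind2 : IndepFun (fun ω p => V p ω) (x a) P :=
    hind.comp (φ := id) (ψ := fun f : Unit → ℝ => f ()) measurable_id (measurable_pi_apply ())
  have hlaw : P.map (x a) = gaussianReal 0 b.toNNReal := by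
    rw [(hG.eval a).map_eq_gaussianReal]
    have h1 : ∫ ω, x a ω ∂P = 0 := h0 a
    rw [variance_eq_sub (hL2 a), h1]
    have : ∫ ω, (x a ^ 2) ω ∂P = b := by
      rw [hb, ← hc a]; congr 1; ext ω; simp [sq]
    rw [this]; simp
  have hprod : P.map (fun ω => ((fun p => V p ω), x a ω)) =
      (P.map (fun ω p => V p ω)).prod (gaussianReal 0 b.toNNReal) := by
    rw [(indepFun_iff_map_prod_eq_prod_map_map (measurable_pi_iff.2 hVm).aemeasurable
      (hxm a).aemeasurable).1 hind2, hlaw]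
  have hVm' : Measurable (fun ω p => V p ω) := measurable_pi_iff.2 hVm
  have hpm : Measurable (fun ω => ((fun p => V p ω), x a ω)) := hVm'.prodMk (hxm a)
  have hrec : ∀ ω, (fun p => x p ω) = (fun p => V p ω) + (x a ω / b) • c := by
    intro ω; ext p; simp [V]; field_simp; ring
  have hv : b.toNNReal ≠ 0 := by simp [hca]
  have : IsProbabilityMeasure (P.map (fun ω p => V p ω)) :=
    Measure.isProbabilityMeasure_map hVm'.aemeasurable
  have hcF : Continuous (fun q : (ι → ℝ) × ℝ => F (q.1 + (q.2 / b) • c)) := by fun_prop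
  have hcF' : Continuous (fun q : (ι → ℝ) × ℝ => F' (q.1 + (q.2 / b) • c)) := by fun_prop
  have hxi : Integrable (fun ω => (x a ω : ℂ) * F (fun p => x p ω)) P := by
    refine Integrable.mul_bdd (c := C) (hG.eval a).integrable.ofReal ?_ (ae_of_all _ fun ω => hC _)
    exact (hFc.measurable.comp (measurable_pi_iff.2 hxm)).aestronglyMeasurable
  have hm1 : AEStronglyMeasurable (fun q : (ι → ℝ) × ℝ => (q.2 : ℂ) * F (q.1 + (q.2 / b) • c))
      (P.map (fun ω => ((fun p => V p ω), x a ω))) := by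
    apply Continuous.aestronglyMeasurable; fun_prop
  have lhs : ∫ ω, (x a ω : ℂ) * F (fun p => x p ω) ∂P = ∫ q, (q.2 : ℂ) * F (q.1 + (q.2 / b) • c)
      ∂((P.map (fun ω p => V p ω)).prod (gaussianReal 0 b.toNNReal)) := by
    rw [← hprod, integral_map hpm.aemeasurable hm1]
    simp_rw [hrec]
  have hint1 : Integrable (fun q : (ι → ℝ) × ℝ => (q.2 : ℂ) * F (q.1 + (q.2 / b) • c))
      ((P.map (fun ω p => V p ω)).prod (gaussianReal 0 b.toNNReal)) := by
    rw [← hprod, integrable_map_measure hm1 hpm.aemeasurable]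
    refine hxi.congr (ae_of_all _ fun ω => ?_)
    simp only [Function.comp]; rw [← hrec]
  have rhs : ∫ ω, F' (fun p => x p ω) ∂P = ∫ q, F' (q.1 + (q.2 / b) • c)
      ∂((P.map (fun ω p => V p ω)).prod (gaussianReal 0 b.toNNReal)) := by
    rw [← hprod, integral_map hpm.aemeasurable hcF'.aestronglyMeasurable]
    simp_rw [hrec]
  have hint2 : Integrable (fun q : (ι → ℝ) × ℝ => F' (q.1 + (q.2 / b) • c))
      ((P.map (fun ω p => V p ω)).prod (gaussianReal 0 b.toNNReal)) :=
    Integrable.of_bound hcF'.aestronglyMeasurable C (ae_of_all _ fun q => hC' _)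
  rw [lhs, rhs, integral_prod _ hint1, integral_prod _ hint2]
  congr 1; ext w
  have hst := stein1 b.toNNReal hv (fun s => F (w + (s / b) • c))
    (fun s => (b⁻¹ : ℂ) * F' (w + (s / b) • c)) ?_ (max C (|b⁻¹| * C)) (fun s => (hC _).trans (le_max_left _ _)) ?_ ?_
  · rw [hst, integral_const_mul, ← mul_assoc]
    have : ((b.toNNReal : ℝ) : ℂ) * (b : ℂ)⁻¹ = 1 := by
      rw [Real.coe_toNNReal _ hca.le]
      exact mul_inv_cancel₀ (by exact_mod_cast hca.ne')
    rw [this, one_mul]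
  · intro s
    have h1 := hd (w + (s / b) • c)
    have h2 : HasDerivAt (fun u : ℝ => u / b - s / b) (b⁻¹) s := by
      simpa using ((hasDerivAt_id s).div_const b).sub_const (s / b)
    have h3 : HasDerivAt (fun t : ℝ => F ((w + (s / b) • c) + t • c)) (F' (w + (s / b) • c))
      ((fun u : ℝ => u / b - s / b) s) := by simpa using h1
    have h4 := h3.scomp s h2
    refine (h4.congr_deriv (by simp)).congr_of_eventuallyEq (Eventually.of_forall fun u => ?_)
    simp only [Function.comp]
    congr 1; rw [add_assoc, ← add_smul]; congr 2; ring
  · intro s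
    rw [norm_mul]
    refine le_trans ?_ (le_max_right _ _)
    have : ‖(b : ℂ)⁻¹‖ = |b⁻¹| := by rw [← Complex.ofReal_inv, Complex.norm_real]; rfl
    rw [this]; gcongr; exact hC' _
  · apply Continuous.measurable; fun_prop

def kr (u : ℤ) : ℝ := ∫ x in (-(π / 2))..(π / 2), Real.cos (u * x)

lemma kr_neg (u : ℤ) : kr (-u) = kr u := by
  simp [kr]

lemma kr_zero : kr 0 = π := by
  simp [kr]

def Kmat (N : ℕ) : Matrix (Fin N) (Fin N) ℝ := fun i j => kr ((i : ℕ) - (j : ℕ) : ℤ)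

lemma Kmat_symm (N : ℕ) (i j : Fin N) : Kmat N i j = Kmat N j i := by
  unfold Kmat; rw [← kr_neg]; congr 1; ring

lemma expint (u : ℤ) : ∫ x in (-(π / 2))..(π / 2), Complex.exp (Complex.I * ((u * x : ℝ) : ℂ)) = (kr u : ℂ) := by
  have h1 : ∀ x : ℝ, Complex.exp (Complex.I * ((u * x : ℝ) : ℂ)) =
      ((Real.cos (u * x) : ℝ) : ℂ) + Complex.I * ((Real.sin (u * x) : ℝ) : ℂ) := by
    intro x
    rw [mul_comm, Complex.exp_mul_I, ← Complex.ofReal_cos, ← Complex.ofReal_sin]; ring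
  simp_rw [h1]
  have hs : ∫ x in (-(π / 2))..(π / 2), Real.sin (u * x) = 0 := by
    have := intervalIntegral.integral_comp_neg (a := -(π/2)) (b := π/2) (fun x => Real.sin (u * x))
    simp only [mul_neg, Real.sin_neg, neg_neg, intervalIntegral.integral_neg] at this
    linarith
  rw [intervalIntegral.integral_add, intervalIntegral.integral_const_mul,
    intervalIntegral.integral_ofReal, intervalIntegral.integral_ofReal, hs]
  · simp [kr]
  · apply Continuous.intervalIntegrable; fun_prop
  · apply Continuous.intervalIntegrable; fun_prop

lemma expint2 (u : ℤ) : ∫ x in Set.Ioc (-π) π, Complex.exp (Complex.I * ((u * x : ℝ) : ℂ)) *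
    (if x ∈ Set.Icc (-(π / 2)) (π / 2) then 1 else 0) = (kr u : ℂ) := by
  rw [← expint, intervalIntegral.integral_of_le (by linarith [pi_pos]), ← integral_Icc_eq_integral_Ioc (x := -(π/2))]
  have : ∀ x : ℝ, Complex.exp (Complex.I * ((u * x : ℝ) : ℂ)) *
    (if x ∈ Set.Icc (-(π / 2)) (π / 2) then 1 else 0) = (Set.Icc (-(π / 2)) (π / 2)).indicator
      (fun x : ℝ => Complex.exp (Complex.I * ((u * x : ℝ) : ℂ))) x := by
    intro x
    by_cases hx : x ∈ Set.Icc (-(π / 2)) (π / 2)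
    · rw [Set.indicator_of_mem hx, if_pos hx, mul_one]
    · rw [Set.indicator_of_notMem hx, if_neg hx, mul_zero]
  simp_rw [this]
  rw [integral_indicator measurableSet_Icc, Measure.restrict_restrict measurableSet_Icc]
  congr 2
  apply Set.inter_eq_left.2
  intro x hx
  constructor <;> linarith [hx.1, hx.2, pi_pos]

lemma cov_eq {Ω : Type} [MeasurableSpace Ω] (P : Measure Ω)
    (X : ℤ → ℤ → Ω → ℝ)
    (hX : StatGauss P X)
    (hXf : HasSpecDensity P X (fun q =>
      if q.1 ∈ Set.Icc (-(π / 2)) (π / 2) ∧ q.2 ∈ Set.Icc (-(π / 2)) (π / 2)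
      then 1 else 0)) (j k l m : ℤ) :
    ∫ ω, X j k ω * X l m ω ∂P = kr (l - j) * kr (m - k) := by
  have h1 := hX.stat j k (l - j) (m - k)
  simp only [add_sub_cancel] at h1
  rw [h1]
  have h2 := hXf (l - j) (m - k)
  rw [← Complex.ofReal_inj, ← h2, specBox, Measure.volume_eq_prod, ← Measure.prod_restrict]
  rw [Complex.ofReal_mul, ← expint2, ← expint2, ← integral_prod_mul]
  congr 1; ext q
  have : Complex.exp (Complex.I * ((((l - j : ℤ) : ℝ) * q.1 + ((m - k : ℤ) : ℝ) * q.2 : ℝ) : ℂ)) =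
    Complex.exp (Complex.I * ((((l - j : ℤ) : ℝ) * q.1 : ℝ) : ℂ)) *
     Complex.exp (Complex.I * ((((m - k : ℤ) : ℝ) * q.2 : ℝ) : ℂ)) := by
    rw [← Complex.exp_add]; congr 1; push_cast; ring
  rw [this]
  by_cases ha : q.1 ∈ Set.Icc (-(π / 2)) (π / 2) <;> by_cases hb : q.2 ∈ Set.Icc (-(π / 2)) (π / 2)
  · simp only [if_pos ha, if_pos hb, if_pos (And.intro ha hb)]; push_cast; ring
  · simp only [if_neg hb, if_neg (fun h : _ ∧ _ => hb h.2)]; push_cast; ring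
  · simp only [if_neg ha, if_neg (fun h : _ ∧ _ => ha h.1)]; push_cast; ring
  · simp only [if_neg ha, if_neg (fun h : _ ∧ _ => ha h.1)]; push_cast; ring

def xs {Ω : Type} (X : ℤ → ℤ → Ω → ℝ) (N : ℕ) (p : Fin N × Fin N) (ω : Ω) : ℝ :=
  X ((p.1 : ℕ) + 1) ((p.2 : ℕ) + 1) ω

lemma xs_gauss {Ω : Type} [MeasurableSpace Ω] (P : Measure Ω)
    (X : ℤ → ℤ → Ω → ℝ) (hX : StatGauss P X) (N : ℕ) :
    HasGaussianLaw (fun ω p => xs X N p ω) P := by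
  have hm : Measurable (fun ω p => xs X N p ω) := measurable_pi_iff.2 fun p => hX.meas _ _
  constructor
  apply isGaussian_of_map_eq_gaussianReal
  intro L
  let e : Fin N × Fin N ↪ ℤ × ℤ := ⟨fun p => (((p.1 : ℕ) : ℤ) + 1, ((p.2 : ℕ) : ℤ) + 1), by
    intro p q h
    simp only [Prod.mk.injEq] at h
    ext <;> omega⟩
  let c0 : (Fin N × Fin N) →₀ ℝ := Finsupp.equivFunOnFinite.symm fun p => L (Pi.single p 1)
  obtain ⟨v, hv⟩ := hX.gauss (Finsupp.embDomain e c0)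
  refine ⟨0, v, ?_⟩
  rw [← hv, Measure.map_map (by fun_prop) hm]
  congr 1; ext ω
  simp only [Function.comp]
  rw [Finsupp.support_embDomain, Finset.sum_map]
  simp only [Finsupp.embDomain_apply_self]
  rw [Finset.sum_subset (Finset.subset_univ _) (fun p _ hp => by
    simp [Finsupp.notMem_support_iff.1 hp])]
  have h1 : (fun p => xs X N p ω) = ∑ p, xs X N p ω • (Pi.single p (1 : ℝ) : Fin N × Fin N → ℝ) := by
    ext q; simp [Finset.sum_apply, Pi.single_apply]
  rw [h1, map_sum]
  refine Finset.sum_congr rfl fun p _ => ?_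
  rw [map_smul, smul_eq_mul, mul_comm]
  rfl

lemma xs_mean {Ω : Type} [MeasurableSpace Ω] (P : Measure Ω)
    (X : ℤ → ℤ → Ω → ℝ) (hX : StatGauss P X) (N : ℕ) (p : Fin N × Fin N) :
    ∫ ω, xs X N p ω ∂P = 0 := by
  obtain ⟨v, hv⟩ := hX.gauss (Finsupp.single (((p.1 : ℕ) : ℤ) + 1, ((p.2 : ℕ) : ℤ) + 1) 1)
  rw [Finsupp.support_single _ one_ne_zero] at hv
  simp only [Finset.sum_singleton, Finsupp.single_eq_same, one_mul] at hv
  have := integral_map (μ := P) (φ := xs X N p) (hX.meas _ _).aemeasurable (f := fun x : ℝ => x) (by fun_prop)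
  rw [← this]
  unfold xs
  rw [hv, integral_id_gaussianReal]

lemma xs_cov {Ω : Type} [MeasurableSpace Ω] (P : Measure Ω)
    (X : ℤ → ℤ → Ω → ℝ)
    (hX : StatGauss P X)
    (hXf : HasSpecDensity P X (fun q =>
      if q.1 ∈ Set.Icc (-(π / 2)) (π / 2) ∧ q.2 ∈ Set.Icc (-(π / 2)) (π / 2)
      then 1 else 0)) (N : ℕ) (p q : Fin N × Fin N) :
    ∫ ω, xs X N p ω * xs X N q ω ∂P = Kmat N p.1 q.1 * Kmat N p.2 q.2 := by
  unfold xs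
  rw [cov_eq P X hX hXf, Kmat_symm N p.1, Kmat_symm N p.2]
  unfold Kmat
  congr 2 <;> ring

lemma interval_psd (N : ℕ) (a b : ℝ) (hab : a ≤ b) :
    (Matrix.of fun i j : Fin N => ∫ x in a..b, Real.cos (((i : ℕ) - (j : ℕ) : ℝ) * x)).PosSemidef := by
  refine Matrix.PosSemidef.of_dotProduct_mulVec_nonneg ?_ ?_
  · ext i j
    simp only [Matrix.conjTranspose_apply, Matrix.of_apply, star_trivial]
    congr 1; ext x; rw [← Real.cos_neg]; congr 1; ring
  · intro v
    have : star v ⬝ᵥ ((Matrix.of fun i j : Fin N => ∫ x in a..b, Real.cos (((i : ℕ) - (j : ℕ) : ℝ) * x)).mulVec v)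
      = ∫ x in a..b, ((∑ i, v i * Real.cos ((i : ℕ) * x)) ^ 2 + (∑ i, v i * Real.sin ((i : ℕ) * x)) ^ 2) := by
      have e : ∀ x : ℝ, ((∑ i, v i * Real.cos ((i : ℕ) * x)) ^ 2 + (∑ i, v i * Real.sin ((i : ℕ) * x)) ^ 2)
        = ∑ i : Fin N, ∑ j : Fin N, v i * (Real.cos (((i : ℕ) - (j : ℕ) : ℝ) * x) * v j) := by
        intro x
        rw [sq, sq, Finset.sum_mul_sum, Finset.sum_mul_sum, ← Finset.sum_add_distrib]
        refine Finset.sum_congr rfl fun i _ => ?_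
        rw [← Finset.sum_add_distrib]
        refine Finset.sum_congr rfl fun j _ => ?_
        rw [sub_mul, Real.cos_sub]; ring
      simp_rw [e]
      rw [intervalIntegral.integral_finsetSum]
      · simp only [dotProduct, Matrix.mulVec, Matrix.of_apply, Pi.star_apply, star_trivial]
        refine Finset.sum_congr rfl fun i _ => ?_
        rw [intervalIntegral.integral_finsetSum, Finset.mul_sum]
        · refine Finset.sum_congr rfl fun j _ => ?_
          rw [intervalIntegral.integral_const_mul, intervalIntegral.integral_mul_const]
        · intro j _
          apply Continuous.intervalIntegrable; fun_prop
      · intro j _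
        apply Continuous.intervalIntegrable; fun_prop
    rw [this]
    exact intervalIntegral.integral_nonneg hab fun x _ => by positivity

lemma Kmat_psd (N : ℕ) : (Kmat N).PosSemidef := by
  have := interval_psd N (-(π/2)) (π/2) (by linarith [pi_pos])
  convert this using 1
  ext i j
  simp [Kmat, kr]

lemma Kmat_psd' (N : ℕ) : ((2 * π) • (1 : Matrix (Fin N) (Fin N) ℝ) - Kmat N).PosSemidef := by
  have h1 := interval_psd N (-π) (-(π/2)) (by linarith [pi_pos])
  have h2 := interval_psd N (π/2) π (by linarith [pi_pos])
  convert h1.add h2 using 1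
  ext i j
  simp only [Matrix.sub_apply, Matrix.smul_apply, Matrix.add_apply, Matrix.of_apply, Kmat, kr]
  have hi : ∀ a b : ℝ, IntervalIntegrable (fun x => Real.cos (((i : ℕ) - (j : ℕ) : ℝ) * x)) volume a b := by
    intro a b; apply Continuous.intervalIntegrable; fun_prop
  have hall : ∫ x in (-π)..π, Real.cos (((i : ℕ) - (j : ℕ) : ℝ) * x) =
      2 * π * (1 : Matrix (Fin N) (Fin N) ℝ) i j := by
    by_cases hij : i = j
    · subst hij; simp; ring
    · rw [Matrix.one_apply_ne hij, mul_zero]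
      have hne : ((i : ℕ) - (j : ℕ) : ℝ) ≠ 0 := by
        rw [sub_ne_zero]; intro h; apply hij; ext; exact_mod_cast h
      rw [intervalIntegral.integral_comp_mul_left _ hne, integral_cos]
      have h1 : Real.sin (((i : ℕ) - (j : ℕ) : ℝ) * π) = 0 := by
        have := Real.sin_int_mul_pi ((i : ℕ) - (j : ℕ) : ℤ)
        push_cast at this; exact this
      simp [h1]
  have s1 := intervalIntegral.integral_add_adjacent_intervals (hi (-π) (-(π/2))) (hi (-(π/2)) (π/2))
  have s2 := intervalIntegral.integral_add_adjacent_intervals (hi (-π) ((π/2))) (hi ((π/2)) (π))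
  rw [smul_eq_mul, ← hall]
  push_cast
  linarith


lemma kr_sq (n : ℕ) : kr n ^ 2 = if n = 0 then π ^ 2 else (if Even n then 0 else 4 * (1 / (n : ℝ) ^ 2)) := by
  split_ifs with h1 h2
  · subst h1; rw [Nat.cast_zero, kr_zero]
  all_goals
    have hn : (n : ℝ) ≠ 0 := by exact_mod_cast h1
    unfold kr
    push_cast
    rw [intervalIntegral.integral_comp_mul_left _ hn, integral_cos]
  · obtain ⟨k, rfl⟩ := h2
    have : Real.sin (((k + k : ℕ) : ℝ) * (π / 2)) = 0 := by
      rw [← Real.sin_nat_mul_pi k]; congr 1; push_cast; ring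
    simp only [mul_neg, Real.sin_neg, this]; simp
  · have h3 : Odd n := Nat.not_even_iff_odd.1 h2
    obtain ⟨k, rfl⟩ := h3
    have : Real.sin (((2 * k + 1 : ℕ) : ℝ) * (π / 2)) ^ 2 = 1 := by
      have hc : Real.cos (((2 * k + 1 : ℕ) : ℝ) * (π / 2)) = 0 := by
        rw [Real.cos_eq_zero_iff]; exact ⟨k, by push_cast; ring⟩
      have := Real.sin_sq_add_cos_sq (((2 * k + 1 : ℕ) : ℝ) * (π / 2))
      rw [hc] at this; linarith
    simp only [mul_neg, Real.sin_neg, smul_eq_mul, sub_neg_eq_add, ← two_mul]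
    rw [mul_pow, mul_pow, this]; field_simp; norm_num

lemma kr_hasSum : HasSum (fun n : ℕ => kr (n + 1 : ℕ) ^ 2) (π ^ 2 / 2) := by
  have hz := hasSum_zeta_two
  have he : HasSum (fun k : ℕ => 1 / ((2 * k : ℕ) : ℝ) ^ 2) (π ^ 2 / 24) := by
    have := hz.mul_left (1 / 4)
    have hf : (fun k : ℕ => 1 / ((2 * k : ℕ) : ℝ) ^ 2) = fun k : ℕ => 1 / 4 * (1 / (k : ℝ) ^ 2) := by
      ext k; push_cast; rw [mul_pow, ← one_div_mul_one_div]; norm_num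
    rw [hf, show π ^ 2 / 24 = 1 / 4 * (π ^ 2 / 6) by ring]
    exact this
  have hos : Summable (fun k : ℕ => 1 / ((2 * k + 1 : ℕ) : ℝ) ^ 2) :=
    hz.summable.comp_injective (i := fun k : ℕ => 2 * k + 1) (fun a b h => by simpa using h)
  have ho : HasSum (fun k : ℕ => 1 / ((2 * k + 1 : ℕ) : ℝ) ^ 2) (π ^ 2 / 8) := by
    have h1 := he.even_add_odd (f := fun n : ℕ => 1 / (n : ℝ) ^ 2) hos.hasSum
    have h2 := h1.unique hz
    have h3 := hos.hasSum
    convert h3 using 1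
    linarith
  have hn : HasSum (fun n : ℕ => kr n ^ 2 - if n = 0 then π ^ 2 else 0) (0 + π ^ 2 / 2) := by
    apply HasSum.even_add_odd
    · convert (hasSum_zero : HasSum (fun _ : ℕ => (0:ℝ)) 0) using 1
      ext k; rw [kr_sq]; by_cases hk : k = 0 <;> simp [hk]
    · have := ho.mul_left 4
      have hf : (fun k : ℕ => kr ((2 * k + 1 : ℕ) : ℤ) ^ 2 - if 2 * k + 1 = 0 then π ^ 2 else 0) =
          fun k : ℕ => 4 * (1 / ((2 * k + 1 : ℕ) : ℝ) ^ 2) := by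
        ext k; rw [kr_sq]; simp
      rw [show π ^ 2 / 2 = 4 * (π ^ 2 / 8) by ring]
      rw [← hf] at this
      exact this
  rw [zero_add] at hn
  have := (hasSum_nat_add_iff' 1).2 hn
  simpa [kr_zero] using this

lemma K2_sum_succ (N : ℕ) : ∑ i : Fin (N + 1), ∑ j : Fin (N + 1), Kmat (N + 1) i j ^ 2 =
    ∑ i : Fin N, ∑ j : Fin N, Kmat N i j ^ 2 + (π ^ 2 + 2 * ∑ n ∈ Finset.range N, kr (n + 1 : ℕ) ^ 2) := by
  rw [Fin.sum_univ_castSucc]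
  simp_rw [Fin.sum_univ_castSucc]
  rw [Finset.sum_add_distrib]
  have e1 : ∀ i j : Fin N, Kmat (N + 1) i.castSucc j.castSucc = Kmat N i j := fun i j => by simp [Kmat]
  have e2 : ∑ i : Fin N, Kmat (N + 1) (Fin.last N) i.castSucc ^ 2 = ∑ n ∈ Finset.range N, kr (n + 1 : ℕ) ^ 2 := by
    rw [← Finset.sum_range_reflect, Finset.sum_range]
    refine Finset.sum_congr rfl fun i _ => ?_
    simp only [Kmat, Fin.val_last, Fin.val_castSucc]
    congr 2
    have := i.2
    omega
  have e3 : ∑ i : Fin N, Kmat (N + 1) i.castSucc (Fin.last N) ^ 2 = ∑ n ∈ Finset.range N, kr (n + 1 : ℕ) ^ 2 := by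
    rw [← e2]; refine Finset.sum_congr rfl fun i _ => ?_
    rw [Kmat_symm]
  simp_rw [e1]
  rw [e2, e3]
  have : Kmat (N + 1) (Fin.last N) (Fin.last N) = π := by simp [Kmat, kr_zero]
  rw [this]; ring

lemma K2_sum (N : ℕ) : ∑ i : Fin N, ∑ j : Fin N, Kmat N i j ^ 2 =
    ∑ m ∈ Finset.range N, (π ^ 2 + 2 * ∑ n ∈ Finset.range m, kr (n + 1 : ℕ) ^ 2) := by
  induction N with
  | zero => simp
  | succ N ih => rw [K2_sum_succ, ih, Finset.sum_range_succ]

def Dmat (N : ℕ) : Matrix (Fin N) (Fin N) ℝ := (2 * π) • Kmat N - Kmat N * Kmat N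

lemma Kmat_trace (N : ℕ) : (Kmat N).trace = N * π := by
  simp [Matrix.trace, Kmat, kr_zero]

lemma K2_trace (N : ℕ) : (Kmat N * Kmat N).trace = ∑ i : Fin N, ∑ j : Fin N, Kmat N i j ^ 2 := by
  simp only [Matrix.trace, Matrix.diag_apply, Matrix.mul_apply]
  refine Finset.sum_congr rfl fun i _ => Finset.sum_congr rfl fun j _ => ?_
  rw [Kmat_symm N j i, sq]

lemma Dmat_tendsto : Tendsto (fun N : ℕ => (N : ℝ)⁻¹ * (Dmat N).trace) atTop (nhds 0) := by
  have h1 : Tendsto (fun m : ℕ => (π ^ 2 + 2 * ∑ n ∈ Finset.range m, kr (n + 1 : ℕ) ^ 2)) atTop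
      (nhds (π ^ 2 + 2 * (π ^ 2 / 2))) :=
    (kr_hasSum.tendsto_sum_nat.const_mul 2).const_add _
  have h2 := (h1.cesaro).const_sub (2 * π ^ 2)
  have : 2 * π ^ 2 - (π ^ 2 + 2 * (π ^ 2 / 2)) = 0 := by ring
  rw [this] at h2
  refine h2.congr' ?_
  filter_upwards [eventually_gt_atTop 0] with N hN
  have hN' : (N : ℝ) ≠ 0 := by positivity
  rw [Dmat, Matrix.trace_sub, Matrix.trace_smul, K2_trace, K2_sum, Kmat_trace, smul_eq_mul]
  field_simp

/-- `2π D` is a sum of two positive semidefinite matrices -/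
lemma Dmat_psd (N : ℕ) : (Dmat N).PosSemidef := by
  set K := Kmat N
  set Q := (2 * π) • (1 : Matrix (Fin N) (Fin N) ℝ) - Kmat N with hQ
  have hK : K.PosSemidef := Kmat_psd N
  have hQp : Q.PosSemidef := Kmat_psd' N
  have h1 := hQp.conjTranspose_mul_mul_same K
  have h2 := hK.conjTranspose_mul_mul_same Q
  rw [hK.isHermitian.eq] at h1
  rw [hQp.isHermitian.eq] at h2
  have h3 := (h1.add h2).smul (show (0:ℝ) ≤ (2 * π)⁻¹ by positivity)
  convert h3 using 1
  have hne : (2 * π) ≠ 0 := by positivity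
  have : K * Q * K + Q * K * Q = (2 * π) • Dmat N := by
    rw [hQ, Dmat]
    simp only [mul_sub, sub_mul, Matrix.mul_smul, Matrix.smul_mul, Matrix.mul_one, Matrix.one_mul, smul_sub, Matrix.mul_assoc]
    module
  rw [this, smul_smul, inv_mul_cancel₀ hne, one_smul]

/-- complexification of a real matrix -/
def cx {N : ℕ} (Y : Matrix (Fin N) (Fin N) ℝ) : Matrix (Fin N) (Fin N) ℂ := Y.map Complex.ofRealHom

def Rm {N : ℕ} (Y : Matrix (Fin N) (Fin N) ℝ) (z : ℂ) : Matrix (Fin N) (Fin N) ℂ :=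
  (cx Y - z • 1)⁻¹

lemma cx_mul {N : ℕ} (A B : Matrix (Fin N) (Fin N) ℝ) : cx (A * B) = cx A * cx B := Matrix.map_mul
lemma cx_one {N : ℕ} : cx (1 : Matrix (Fin N) (Fin N) ℝ) = 1 := by simp [cx]
lemma cx_add {N : ℕ} (A B : Matrix (Fin N) (Fin N) ℝ) : cx (A + B) = cx A + cx B := by
  ext; simp [cx]
lemma cx_sub {N : ℕ} (A B : Matrix (Fin N) (Fin N) ℝ) : cx (A - B) = cx A - cx B := by
  ext; simp [cx]
lemma cx_smul {N : ℕ} (s : ℝ) (A : Matrix (Fin N) (Fin N) ℝ) : cx (s • A) = (s : ℂ) • cx A := by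
  ext; simp [cx]
lemma cx_transpose {N : ℕ} (A : Matrix (Fin N) (Fin N) ℝ) : cx A.transpose = (cx A).transpose := rfl
lemma cx_trace {N : ℕ} (A : Matrix (Fin N) (Fin N) ℝ) : (cx A).trace = (A.trace : ℂ) := by
  simp [cx, Matrix.trace]

lemma norm_inv_le {z : ℂ} (hz : 0 < z.im) (l : ℝ) : ‖((l : ℂ) - z)⁻¹‖ ≤ z.im⁻¹ := by
  rw [norm_inv]
  apply inv_anti₀ hz
  have := Complex.abs_im_le_norm ((l : ℂ) - z)
  simp only [Complex.sub_im, Complex.ofReal_im, zero_sub, abs_neg, abs_of_pos hz] at this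
  exact this

lemma sub_ne {z : ℂ} (hz : 0 < z.im) (l : ℝ) : (l : ℂ) - z ≠ 0 := by
  intro h
  have := congrArg Complex.im h
  simp at this; linarith

lemma spec {N : ℕ} {Y : Matrix (Fin N) (Fin N) ℝ} (hY : Y.IsHermitian) {z : ℂ} (hz : 0 < z.im) :
    ∃ U : Matrix (Fin N) (Fin N) ℝ, U * U.transpose = 1 ∧ U.transpose * U = 1 ∧
      IsUnit (cx Y - z • 1).det ∧
      Rm Y z = cx U * Matrix.diagonal (fun j => ((hY.eigenvalues j : ℂ) - z)⁻¹) * cx U.transpose := by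
  have hs := hY.spectral_theorem
  rw [Unitary.conjStarAlgAut_apply] at hs
  set U : Matrix (Fin N) (Fin N) ℝ := (hY.eigenvectorUnitary : Matrix (Fin N) (Fin N) ℝ) with hU
  have hst : star U = U.transpose := by
    rw [Matrix.star_eq_conjTranspose]; ext; simp
  have h1 : U * U.transpose = 1 := by rw [← hst]; exact Unitary.mul_star_self_of_mem hY.eigenvectorUnitary.2
  have h2 : U.transpose * U = 1 := by rw [← hst]; exact Unitary.star_mul_self_of_mem hY.eigenvectorUnitary.2
  have hYe : Y = U * Matrix.diagonal hY.eigenvalues * U.transpose := by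
    conv_lhs => rw [hs]
    rw [← hst]; rfl
  have c1 : cx U * cx U.transpose = 1 := by rw [← cx_mul, h1, cx_one]
  have c2 : cx U.transpose * cx U = 1 := by rw [← cx_mul, h2, cx_one]
  have hM : cx Y - z • 1 = cx U * Matrix.diagonal (fun j => ((hY.eigenvalues j : ℂ) - z)) * cx U.transpose := by
    have e : Matrix.diagonal (fun j => ((hY.eigenvalues j : ℂ) - z)) =
      cx (Matrix.diagonal hY.eigenvalues) - z • (1 : Matrix (Fin N) (Fin N) ℂ) := by
      ext i j
      by_cases hij : i = j
      · subst hij; simp [cx]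
      · simp [cx, hij]
    rw [e, mul_sub, sub_mul, Matrix.mul_smul, Matrix.mul_one, Matrix.smul_mul, c1, ← cx_mul, ← cx_mul, ← hYe]
  have hR : (cx Y - z • 1) * (cx U * Matrix.diagonal (fun j => ((hY.eigenvalues j : ℂ) - z)⁻¹) * cx U.transpose) = 1 := by
    rw [hM]
    calc _ = cx U * Matrix.diagonal (fun j => ((hY.eigenvalues j : ℂ) - z)) * (cx U.transpose * cx U) *
      Matrix.diagonal (fun j => ((hY.eigenvalues j : ℂ) - z)⁻¹) * cx U.transpose := by
          simp only [Matrix.mul_assoc]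
      _ = cx U * (Matrix.diagonal (fun j => ((hY.eigenvalues j : ℂ) - z)) *
      Matrix.diagonal (fun j => ((hY.eigenvalues j : ℂ) - z)⁻¹)) * cx U.transpose := by
          rw [c2]; simp only [Matrix.mul_assoc, Matrix.one_mul]
      _ = 1 := by
        rw [Matrix.diagonal_mul_diagonal]
        have : (fun j => ((hY.eigenvalues j : ℂ) - z) * ((hY.eigenvalues j : ℂ) - z)⁻¹) = fun _ => 1 := by
          ext j; exact mul_inv_cancel₀ (sub_ne hz _)
        rw [this, Matrix.diagonal_one, Matrix.mul_one, c1]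
  exact ⟨U, h1, h2, Matrix.isUnit_det_of_right_inverse hR, Matrix.inv_eq_right_inv hR⟩

lemma trace_spec {N : ℕ} (U B : Matrix (Fin N) (Fin N) ℝ) (g : Fin N → ℂ) :
    (cx B * (cx U * Matrix.diagonal g * cx U.transpose)).trace =
      ∑ j, (((U.transpose * B * U) j j : ℝ) : ℂ) * g j := by
  rw [← Matrix.mul_assoc, Matrix.trace_mul_comm, ← Matrix.mul_assoc, ← Matrix.mul_assoc, ← cx_mul, ← cx_mul]
  simp only [Matrix.trace, Matrix.diag_apply, Matrix.mul_diagonal]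
  rfl

lemma Rm_trace {N : ℕ} {Y : Matrix (Fin N) (Fin N) ℝ} (hY : Y.IsHermitian) {z : ℂ} (hz : 0 < z.im) :
    (Rm Y z).trace = ∑ j, ((hY.eigenvalues j : ℂ) - z)⁻¹ := by
  obtain ⟨U, h1, h2, -, hR⟩ := spec hY hz
  have := trace_spec U 1 (fun j => ((hY.eigenvalues j : ℂ) - z)⁻¹)
  rw [cx_one, Matrix.one_mul, Matrix.mul_one, h2, ← hR] at this
  rw [this]; simp

lemma conj_trace {N : ℕ} {U : Matrix (Fin N) (Fin N) ℝ} (h1 : U * U.transpose = 1)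
    (B : Matrix (Fin N) (Fin N) ℝ) : (U.transpose * B * U).trace = B.trace := by
  rw [Matrix.trace_mul_comm, ← Matrix.mul_assoc, h1, Matrix.one_mul]

lemma Rm_psd {N : ℕ} {Y : Matrix (Fin N) (Fin N) ℝ} (hY : Y.IsHermitian) {z : ℂ} (hz : 0 < z.im)
    {B : Matrix (Fin N) (Fin N) ℝ} (hB : B.PosSemidef) :
    ‖(cx B * Rm Y z).trace‖ ≤ z.im⁻¹ * B.trace ∧ 0 ≤ (cx B * Rm Y z).trace.im := by
  obtain ⟨U, h1, h2, -, hR⟩ := spec hY hz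
  rw [hR, trace_spec]
  have hp : (U.transpose * B * U).PosSemidef := by
    have := hB.conjTranspose_mul_mul_same U
    rwa [show U.conjTranspose = U.transpose by ext; simp] at this
  have hd : ∀ j, 0 ≤ (U.transpose * B * U) j j := fun j => hp.diag_nonneg
  constructor
  · refine (norm_sum_le _ _).trans ?_
    rw [← conj_trace h1 B, Matrix.trace, Finset.mul_sum]
    refine Finset.sum_le_sum fun j _ => ?_
    rw [norm_mul, Complex.norm_real, Real.norm_eq_abs, abs_of_nonneg (hd j), mul_comm]
    exact mul_le_mul_of_nonneg_right (norm_inv_le hz _) (hd j)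
  · rw [Complex.im_sum]
    refine Finset.sum_nonneg fun j _ => ?_
    rw [Complex.im_ofReal_mul]
    refine mul_nonneg (hd j) ?_
    rw [Complex.inv_im]
    refine div_nonneg ?_ (Complex.normSq_nonneg _)
    simp [hz.le]

lemma frob_conj {N : ℕ} {U : Matrix (Fin N) (Fin N) ℝ} (h1 : U * U.transpose = 1)
    (B : Matrix (Fin N) (Fin N) ℝ) :
    ∑ i, ∑ j, (U.transpose * B * U) i j ^ 2 = ∑ i, ∑ j, B i j ^ 2 := by
  have h : ∀ A : Matrix (Fin N) (Fin N) ℝ, ∑ i, ∑ j, A i j ^ 2 = (A * A.transpose).trace := by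
    intro A
    simp [Matrix.trace, Matrix.mul_apply, sq]
  rw [h, h, ← conj_trace h1 (B * B.transpose)]
  congr 1
  simp only [Matrix.transpose_mul, Matrix.transpose_transpose, Matrix.mul_assoc]
  rw [← Matrix.mul_assoc U U.transpose, h1, Matrix.one_mul]

lemma Rm_frob {N : ℕ} {Y : Matrix (Fin N) (Fin N) ℝ} (hY : Y.IsHermitian) {z : ℂ} (hz : 0 < z.im)
    (B : Matrix (Fin N) (Fin N) ℝ) :
    ‖(cx B * Rm Y z).trace‖ ^ 2 ≤ z.im⁻¹ ^ 2 * (N * ∑ i, ∑ j, B i j ^ 2) := by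
  obtain ⟨U, h1, h2, -, hR⟩ := spec hY hz
  rw [hR, trace_spec, ← frob_conj h1 B]
  set A := U.transpose * B * U
  have hb : ‖∑ j, ((A j j : ℝ) : ℂ) * ((hY.eigenvalues j : ℂ) - z)⁻¹‖ ≤ z.im⁻¹ * ∑ j, |A j j| := by
    refine (norm_sum_le _ _).trans ?_
    rw [Finset.mul_sum]
    refine Finset.sum_le_sum fun j _ => ?_
    rw [norm_mul, Complex.norm_real, Real.norm_eq_abs, mul_comm]
    exact mul_le_mul_of_nonneg_right (norm_inv_le hz _) (abs_nonneg _)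
  refine (pow_le_pow_left₀ (norm_nonneg _) hb 2).trans ?_
  rw [mul_pow]
  gcongr
  have := sq_sum_le_card_mul_sum_sq (s := Finset.univ) (f := fun j => |A j j|)
  simp only [Finset.card_univ, Fintype.card_fin, sq_abs] at this
  refine this.trans ?_
  gcongr with i hi
  exact Finset.single_le_sum (f := fun j => A i j ^ 2) (fun j _ => sq_nonneg _) (Finset.mem_univ i)

lemma Rm_KK {N : ℕ} {Y : Matrix (Fin N) (Fin N) ℝ} (hY : Y.IsHermitian) {z : ℂ} (hz : 0 < z.im)
    {B : Matrix (Fin N) (Fin N) ℝ} (hB : B.transpose = B) :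
    ‖(cx B * Rm Y z * (cx B * Rm Y z)).trace‖ ≤ z.im⁻¹ ^ 2 * ∑ i, ∑ j, B i j ^ 2 := by
  obtain ⟨U, h1, h2, -, hR⟩ := spec hY hz
  rw [hR, ← frob_conj h1 B]
  set A := U.transpose * B * U with hA
  set g := fun j => ((hY.eigenvalues j : ℂ) - z)⁻¹
  have e : (cx B * (cx U * Matrix.diagonal g * cx U.transpose) * (cx B * (cx U * Matrix.diagonal g * cx U.transpose))).trace
      = (cx A * Matrix.diagonal g * (cx A * Matrix.diagonal g)).trace := by
    rw [hA]
    simp only [cx_mul, ← Matrix.mul_assoc]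
    rw [Matrix.trace_mul_comm]
    simp only [← Matrix.mul_assoc]
  have hAs : ∀ i j, A i j = A j i := by
    intro i j
    have : A.transpose = A := by
      rw [hA]; simp only [Matrix.transpose_mul, Matrix.transpose_transpose, hB, Matrix.mul_assoc]
    conv_lhs => rw [← this]
    rfl
  rw [e, Matrix.trace]
  refine (norm_sum_le _ _).trans ?_
  rw [Finset.mul_sum]
  refine Finset.sum_le_sum fun i _ => ?_
  rw [Matrix.diag_apply, Matrix.mul_apply, Finset.mul_sum]
  refine (norm_sum_le _ _).trans (Finset.sum_le_sum fun j _ => ?_)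
  simp only [Matrix.mul_diagonal, cx, Matrix.map_apply, norm_mul]
  rw [hAs j i]
  have ha : ‖Complex.ofRealHom (A i j)‖ = |A i j| := by simp
  rw [ha, ← sq_abs (A i j)]
  have : ‖g j‖ * ‖g i‖ ≤ z.im⁻¹ * z.im⁻¹ :=
    mul_le_mul (norm_inv_le hz _) (norm_inv_le hz _) (norm_nonneg _) (by positivity)
  nlinarith [mul_le_mul_of_nonneg_left this (sq_nonneg |A i j|)]

lemma Rm_entry {N : ℕ} {Y : Matrix (Fin N) (Fin N) ℝ} (hY : Y.IsHermitian) {z : ℂ} (hz : 0 < z.im)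
    (a b : Fin N) : ‖Rm Y z a b‖ ≤ z.im⁻¹ := by
  obtain ⟨U, h1, h2, -, hR⟩ := spec hY hz
  have hrow : ∀ a, ∑ j, U a j ^ 2 = 1 := by
    intro a
    have := congrFun (congrFun h1 a) a
    simpa [Matrix.mul_apply, sq] using this
  rw [hR, Matrix.mul_apply]
  refine (norm_sum_le _ _).trans ?_
  have : ∀ j, ‖(cx U * Matrix.diagonal (fun j => ((hY.eigenvalues j : ℂ) - z)⁻¹)) a j * cx U.transpose j b‖ ≤
      z.im⁻¹ * ((U a j ^ 2 + U b j ^ 2) / 2) := by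
    intro j
    simp only [Matrix.mul_diagonal, cx, Matrix.map_apply, norm_mul, Matrix.transpose_apply]
    have ha : ∀ a, ‖Complex.ofRealHom (U a j)‖ = |U a j| := by simp
    rw [ha, ha]
    have h3 : |U a j| * |U b j| ≤ (U a j ^ 2 + U b j ^ 2) / 2 := by
      rw [← sq_abs (U a j), ← sq_abs (U b j)]; nlinarith [sq_nonneg (|U a j| - |U b j|)]
    calc _ = ‖((hY.eigenvalues j : ℂ) - z)⁻¹‖ * (|U a j| * |U b j|) := by ring
      _ ≤ _ := mul_le_mul (norm_inv_le hz _) h3 (by positivity) (by positivity)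
  refine (Finset.sum_le_sum fun j _ => this j).trans ?_
  rw [← Finset.mul_sum, ← Finset.sum_div, Finset.sum_add_distrib, hrow, hrow]
  norm_num

lemma Rm_mul {N : ℕ} {Y : Matrix (Fin N) (Fin N) ℝ} (hY : Y.IsHermitian) {z : ℂ} (hz : 0 < z.im) :
    cx Y * Rm Y z = 1 + z • Rm Y z := by
  obtain ⟨U, h1, h2, hd, hR⟩ := spec hY hz
  have : (cx Y - z • 1) * Rm Y z = 1 := Matrix.mul_nonsing_inv _ hd
  rw [sub_mul, Matrix.smul_mul, Matrix.one_mul] at this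
  rw [← this]; abel

lemma Rm_symm {N : ℕ} {Y : Matrix (Fin N) (Fin N) ℝ} (hY : Y.IsHermitian) {z : ℂ} (hz : 0 < z.im) :
    (Rm Y z).transpose = Rm Y z := by
  obtain ⟨U, h1, h2, hd, hR⟩ := spec hY hz
  rw [hR]
  simp only [Matrix.transpose_mul, cx_transpose, Matrix.transpose_transpose, Matrix.diagonal_transpose, Matrix.mul_assoc]

lemma Rm_continuous {T : Type*} [TopologicalSpace T] {N : ℕ} (Y : T → Matrix (Fin N) (Fin N) ℝ)
    (hY : ∀ t, (Y t).IsHermitian) (hc : Continuous Y) {z : ℂ} (hz : 0 < z.im) :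
    Continuous (fun t => Rm (Y t) z) := by
  have hM : Continuous fun t => (cx (Y t) - z • 1) := by
    unfold cx
    exact (hc.matrix_map Complex.continuous_ofReal).sub continuous_const
  unfold Rm
  simp_rw [Matrix.inv_def, Ring.inverse_eq_inv']
  refine Continuous.smul (hM.matrix_det.inv₀ fun t => ?_) hM.matrix_adjugate
  obtain ⟨U, h1, h2, hd, hR⟩ := spec (hY t) hz
  exact hd.ne_zero

lemma Rm_deriv {N : ℕ} {Y H : Matrix (Fin N) (Fin N) ℝ} (hY : Y.IsHermitian) (hH : H.IsHermitian)
    {z : ℂ} (hz : 0 < z.im) (a b : Fin N) :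
    HasDerivAt (fun s : ℝ => Rm (Y + s • H) z a b) (-(Rm Y z * cx H * Rm Y z) a b) 0 := by
  have hYs : ∀ s : ℝ, (Y + s • H).IsHermitian := fun s => hY.add (by
    rw [Matrix.IsHermitian, Matrix.conjTranspose_smul, hH.eq]; simp)
  have hcont : Continuous (fun s : ℝ => Rm (Y + s • H) z) :=
    Rm_continuous _ hYs (by fun_prop) hz
  have hres : ∀ s : ℝ, Rm (Y + s • H) z - Rm Y z = -((s : ℂ) • (Rm (Y + s • H) z * cx H * Rm Y z)) := by
    intro s
    obtain ⟨_, _, _, hd, _⟩ := spec (hYs s) hz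
    obtain ⟨_, _, _, hd', _⟩ := spec hY hz
    have e1 : Rm (Y + s • H) z * (cx (Y + s • H) - z • 1) = 1 := Matrix.nonsing_inv_mul _ hd
    have e2 : (cx Y - z • 1) * Rm Y z = 1 := Matrix.mul_nonsing_inv _ hd'
    have e3 : (s : ℂ) • cx H = (cx (Y + s • H) - z • 1) - (cx Y - z • 1) := by
      rw [cx_add, cx_smul]; abel
    calc _ = Rm (Y + s • H) z * ((cx Y - z • 1) * Rm Y z) - (Rm (Y + s • H) z * (cx (Y + s • H) - z • 1)) * Rm Y z := by
          rw [e1, e2, Matrix.mul_one, Matrix.one_mul]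
      _ = -(Rm (Y + s • H) z * ((s : ℂ) • cx H) * Rm Y z) := by
          rw [e3]; noncomm_ring
      _ = _ := by rw [Matrix.mul_smul, Matrix.smul_mul]
  rw [hasDerivAt_iff_tendsto_slope]
  have hlim : Tendsto (fun s : ℝ => -(Rm (Y + s • H) z * cx H * Rm Y z) a b) (nhdsWithin 0 {0}ᶜ)
      (nhds (-(Rm Y z * cx H * Rm Y z) a b)) := by
    have hc2 : Continuous (fun s : ℝ => -(Rm (Y + s • H) z * cx H * Rm Y z) a b) := by
      have : Continuous (fun s : ℝ => (Rm (Y + s • H) z * cx H * Rm Y z)) :=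
        (hcont.matrix_mul continuous_const).matrix_mul continuous_const
      exact (this.matrix_elem a b).neg
    have := hc2.tendsto 0
    simp only [zero_smul, add_zero] at this
    exact this.mono_left nhdsWithin_le_nhds
  refine hlim.congr' ?_
  filter_upwards [self_mem_nhdsWithin] with s hs
  have hs0 : (s : ℂ) ≠ 0 := by exact_mod_cast hs
  have := congrFun (congrFun (hres s) a) b
  simp only [Matrix.sub_apply, Matrix.neg_apply, Matrix.smul_apply] at this
  rw [slope_def_module]
  simp only [zero_smul, add_zero, sub_zero]
  rw [this, Complex.real_smul]
  push_cast
  simp only [smul_eq_mul]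
  field_simp

def Ym {N : ℕ} (y : Fin N × Fin N → ℝ) : Matrix (Fin N) (Fin N) ℝ :=
  fun i j => (Real.sqrt N)⁻¹ * (y (i, j) + y (j, i))

lemma Ym_herm {N : ℕ} (y : Fin N × Fin N → ℝ) : (Ym y).IsHermitian := by
  ext i j; simp [Ym, add_comm]

lemma Ym_add_smul {N : ℕ} (y c : Fin N × Fin N → ℝ) (s : ℝ) : Ym (y + s • c) = Ym y + s • Ym c := by
  ext i j; simp [Ym]; ring

lemma Ym_cont {N : ℕ} : Continuous (Ym : (Fin N × Fin N → ℝ) → _) := by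
  unfold Ym; fun_prop

lemma scaledW_eq {Ω : Type} (X : ℤ → ℤ → Ω → ℝ) (N : ℕ) (ω : Ω) :
    scaledW X N ω = Ym (fun p => xs X N p ω) := rfl

lemma RHR_eq {N : ℕ} (y : Fin N × Fin N → ℝ) {z : ℂ} (hz : 0 < z.im) (i j : Fin N) :
    (Rm (Ym y) z * cx (Ym fun q => Kmat N i q.1 * Kmat N j q.2) * Rm (Ym y) z) j i =
    ((Real.sqrt N)⁻¹ : ℂ) * ((cx (Kmat N) * Rm (Ym y) z) i j * (cx (Kmat N) * Rm (Ym y) z) j i +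
      (cx (Kmat N) * Rm (Ym y) z) j j * (cx (Kmat N) * Rm (Ym y) z) i i) := by
  set R := Rm (Ym y) z with hR
  have hs : ∀ a b, R a b = R b a := fun a b => by
    conv_lhs => rw [hR, ← Rm_symm (Ym_herm y) hz]
    rfl
  have e : (R * cx (Ym fun q => Kmat N i q.1 * Kmat N j q.2) * R) j i =
      ∑ k, ∑ l, R j k * cx (Ym fun q => Kmat N i q.1 * Kmat N j q.2) k l * R l i := by
    simp only [Matrix.mul_apply, Finset.sum_mul]
    exact Finset.sum_comm
  rw [e]
  simp only [Matrix.mul_apply, Finset.sum_mul_sum]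
  rw [← Finset.sum_add_distrib, Finset.mul_sum]
  refine Finset.sum_congr rfl fun k _ => ?_
  rw [← Finset.sum_add_distrib, Finset.mul_sum]
  refine Finset.sum_congr rfl fun l _ => ?_
  simp only [cx, Ym, Matrix.map_apply, Complex.ofRealHom_eq_coe]
  rw [hs j k]
  push_cast
  ring

lemma trace_YR {N : ℕ} (y : Fin N × Fin N → ℝ) {z : ℂ} (hz : 0 < z.im) :
    (cx (Ym y) * Rm (Ym y) z).trace = 2 * (Real.sqrt N : ℂ)⁻¹ * ∑ p : Fin N × Fin N, (y p : ℂ) * Rm (Ym y) z p.2 p.1 := by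
  set R := Rm (Ym y) z with hR
  have hs : ∀ a b, R a b = R b a := fun a b => by
    conv_lhs => rw [hR, ← Rm_symm (Ym_herm y) hz]
    rfl
  have e : ∑ p : Fin N × Fin N, (y p : ℂ) * R p.2 p.1 = ∑ i, ∑ j, (y (i, j) : ℂ) * R j i := Fintype.sum_prod_type _
  have e' : ∑ p : Fin N × Fin N, (y p : ℂ) * R p.2 p.1 = ∑ i, ∑ j, (y (j, i) : ℂ) * R j i := by
    rw [e, Finset.sum_comm]
    refine Finset.sum_congr rfl fun i _ => Finset.sum_congr rfl fun j _ => ?_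
    rw [hs]
  rw [mul_assoc, two_mul, ← mul_add]
  nth_rewrite 1 [e]
  rw [e', ← Finset.sum_add_distrib, Finset.mul_sum]
  simp only [Matrix.trace, Matrix.diag_apply, Matrix.mul_apply]
  refine Finset.sum_congr rfl fun i _ => ?_
  rw [← Finset.sum_add_distrib, Finset.mul_sum]
  refine Finset.sum_congr rfl fun j _ => ?_
  simp only [cx, Ym, Matrix.map_apply, Complex.ofRealHom_eq_coe]
  push_cast
  ring

section
variable {Ω : Type} [MeasurableSpace Ω] (P : Measure Ω)
    [IsProbabilityMeasure P] (X : ℤ → ℤ → Ω → ℝ)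

lemma xs_meas (hX : StatGauss P X) (N : ℕ) : Measurable (fun ω p => xs X N p ω) :=
  measurable_pi_iff.2 fun p => hX.meas _ _

lemma KR_int (hX : StatGauss P X) (N : ℕ) {z : ℂ} (hz : 0 < z.im) (a b c d : Fin N) :
    Integrable (fun ω => (cx (Kmat N) * Rm (scaledW X N ω) z) a b * (cx (Kmat N) * Rm (scaledW X N ω) z) c d) P := by
  have hRc : Continuous (fun y : Fin N × Fin N → ℝ => Rm (Ym y) z) := Rm_continuous _ Ym_herm Ym_cont hz
  have hz' : 0 ≤ z.im⁻¹ := by positivity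
  simp_rw [scaledW_eq]
  have hb : ∀ (a b : Fin N) (y : Fin N × Fin N → ℝ), ‖(cx (Kmat N) * Rm (Ym y) z) a b‖ ≤ ∑ k, |Kmat N a k| * z.im⁻¹ := by
    intro a b y
    rw [Matrix.mul_apply]
    refine (norm_sum_le _ _).trans (Finset.sum_le_sum fun k _ => ?_)
    rw [norm_mul]
    have h3 : ‖cx (Kmat N) a k‖ = |Kmat N a k| := by simp [cx]
    rw [h3]
    gcongr
    exact Rm_entry (Ym_herm _) hz _ _
  have hcc : Continuous (fun y : Fin N × Fin N → ℝ => cx (Kmat N) * Rm (Ym y) z) := continuous_const.matrix_mul hRc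
  have hm : Measurable (fun y : Fin N × Fin N → ℝ => (cx (Kmat N) * Rm (Ym y) z) a b * (cx (Kmat N) * Rm (Ym y) z) c d) :=
    ((hcc.matrix_elem a b).mul (hcc.matrix_elem c d)).measurable
  have hm2 := (hm.comp (xs_meas P X hX N)).aestronglyMeasurable (μ := P)
  refine Integrable.of_bound hm2 ((∑ k, |Kmat N a k| * z.im⁻¹) * (∑ k, |Kmat N c k| * z.im⁻¹)) (ae_of_all _ fun ω => ?_)
  rw [norm_mul]
  exact mul_le_mul (hb _ _ _) (hb _ _ _) (norm_nonneg _) (Finset.sum_nonneg fun _ _ => by positivity)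

lemma ibp_entry (hX : StatGauss P X)
    (hXf : HasSpecDensity P X (fun q =>
      if q.1 ∈ Set.Icc (-(π / 2)) (π / 2) ∧ q.2 ∈ Set.Icc (-(π / 2)) (π / 2)
      then 1 else 0)) (N : ℕ) {z : ℂ} (hz : 0 < z.im) (p : Fin N × Fin N) :
    ∫ ω, (xs X N p ω : ℂ) * Rm (Ym fun p => xs X N p ω) z p.2 p.1 ∂P =
      ∫ ω, -((Real.sqrt N)⁻¹ : ℂ) * ((cx (Kmat N) * Rm (Ym fun p => xs X N p ω) z) p.1 p.2 * (cx (Kmat N) * Rm (Ym fun p => xs X N p ω) z) p.2 p.1 +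
      (cx (Kmat N) * Rm (Ym fun p => xs X N p ω) z) p.2 p.2 * (cx (Kmat N) * Rm (Ym fun p => xs X N p ω) z) p.1 p.1) ∂P := by
  have hRc : Continuous (fun y : Fin N × Fin N → ℝ => Rm (Ym y) z) := Rm_continuous _ Ym_herm Ym_cont hz
  have hz' : 0 ≤ z.im⁻¹ := by positivity
  set c : Fin N × Fin N → ℝ := fun q => Kmat N p.1 q.1 * Kmat N p.2 q.2 with hc
  have hb : ∀ y, ‖-((Rm (Ym y) z * cx (Ym c) * Rm (Ym y) z : Matrix (Fin N) (Fin N) ℂ) p.2 p.1)‖ ≤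
      ∑ k, ∑ l, z.im⁻¹ * |Ym c l k| * z.im⁻¹ := by
    intro y
    rw [norm_neg, Matrix.mul_apply]
    refine (norm_sum_le _ _).trans (Finset.sum_le_sum fun k _ => ?_)
    rw [Matrix.mul_apply, Finset.sum_mul]
    refine (norm_sum_le _ _).trans (Finset.sum_le_sum fun l _ => ?_)
    rw [norm_mul, norm_mul]
    have h1 := Rm_entry (Ym_herm y) hz p.2 l
    have h2 := Rm_entry (Ym_herm y) hz k p.1
    have h3 : ‖cx (Ym c) l k‖ = |Ym c l k| := by simp [cx]
    rw [h3]
    gcongr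
  have := gauss_ibp P (xs X N) (fun p => hX.meas _ _) (xs_gauss P X hX N) (xs_mean P X hX N) p c
    (fun q => xs_cov P X hX hXf N p q) (by simp [hc, Kmat, kr_zero])
    (fun y => Rm (Ym y) z p.2 p.1) (fun y => -((Rm (Ym y) z * cx (Ym c) * Rm (Ym y) z : Matrix (Fin N) (Fin N) ℂ) p.2 p.1))
    (hRc.matrix_elem _ _) (((hRc.matrix_mul continuous_const).matrix_mul hRc).matrix_elem _ _).neg
    (max z.im⁻¹ (∑ k, ∑ l, z.im⁻¹ * |Ym c l k| * z.im⁻¹))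
    (fun y => (Rm_entry (Ym_herm y) hz _ _).trans (le_max_left _ _))
    (fun y => (hb y).trans (le_max_right _ _))
    (fun y => by
      simp_rw [Ym_add_smul]
      exact Rm_deriv (Ym_herm y) (Ym_herm c) hz _ _)
  rw [this]
  congr 1; ext ω
  rw [hc, RHR_eq _ hz]
  ring


lemma xR_int (hX : StatGauss P X) (N : ℕ) {z : ℂ} (hz : 0 < z.im) (p : Fin N × Fin N) :
    Integrable (fun ω => (xs X N p ω : ℂ) * Rm (Ym fun p => xs X N p ω) z p.2 p.1) P := by
  have hRc : Continuous (fun y : Fin N × Fin N → ℝ => Rm (Ym y) z) := Rm_continuous _ Ym_herm Ym_cont hz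
  have hm : Measurable (fun y : Fin N × Fin N → ℝ => Rm (Ym y) z p.2 p.1) := (hRc.matrix_elem _ _).measurable
  have hm2 := (hm.comp (xs_meas P X hX N)).aestronglyMeasurable (μ := P)
  exact Integrable.mul_bdd (c := z.im⁻¹) ((xs_gauss P X hX N).eval p).integrable.ofReal hm2
      (ae_of_all _ fun ω => Rm_entry (Ym_herm _) hz _ _)

lemma sum_pair_trace {N : ℕ} (M : Matrix (Fin N) (Fin N) ℂ) :
    ∑ p : Fin N × Fin N, (M p.1 p.2 * M p.2 p.1 + M p.2 p.2 * M p.1 p.1) = M.trace ^ 2 + (M * M).trace := by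
  rw [Fintype.sum_prod_type]
  simp only [Finset.sum_add_distrib]
  rw [add_comm]
  congr 1
  · simp only [sq, Matrix.trace, Matrix.diag_apply]
    rw [Finset.sum_mul_sum, Finset.sum_comm]

lemma ibp_trace (hX : StatGauss P X)
    (hXf : HasSpecDensity P X (fun q =>
      if q.1 ∈ Set.Icc (-(π / 2)) (π / 2) ∧ q.2 ∈ Set.Icc (-(π / 2)) (π / 2)
      then 1 else 0)) (N : ℕ) {z : ℂ} (hz : 0 < z.im) :
    ∫ ω, (cx (scaledW X N ω) * Rm (scaledW X N ω) z).trace ∂P =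
      - (2 * (N : ℂ)⁻¹) * ∫ ω, ((cx (Kmat N) * Rm (scaledW X N ω) z).trace ^ 2 +
        (cx (Kmat N) * Rm (scaledW X N ω) z * (cx (Kmat N) * Rm (scaledW X N ω) z)).trace) ∂P := by
  have hRc : Continuous (fun y : Fin N × Fin N → ℝ => Rm (Ym y) z) := Rm_continuous _ Ym_herm Ym_cont hz
  have hz' : 0 ≤ z.im⁻¹ := by positivity
  have hkey := ibp_entry P X hX hXf N hz
  have hint2 := KR_int P X hX N hz
  simp_rw [scaledW_eq] at hint2 ⊢
  have hint := xR_int P X hX N hz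
  have hsq : (N : ℂ) = (Real.sqrt N : ℂ) * (Real.sqrt N : ℂ) := by
    rw [← Complex.ofReal_mul, Real.mul_self_sqrt (Nat.cast_nonneg _)]; simp
  have hc : 2 * (Real.sqrt N : ℂ)⁻¹ * (-((Real.sqrt N)⁻¹ : ℂ)) = -(2 * (N : ℂ)⁻¹) := by
    rw [hsq, mul_inv]; ring
  calc ∫ ω, (cx (Ym fun p => xs X N p ω) * Rm (Ym fun p => xs X N p ω) z).trace ∂P
      = ∫ ω, 2 * (Real.sqrt N : ℂ)⁻¹ * ∑ p : Fin N × Fin N, (xs X N p ω : ℂ) * Rm (Ym fun p => xs X N p ω) z p.2 p.1 ∂P :=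
        integral_congr_ae (ae_of_all _ fun ω => trace_YR (fun p => xs X N p ω) hz)
    _ = 2 * (Real.sqrt N : ℂ)⁻¹ * ∑ p : Fin N × Fin N, ∫ ω, (xs X N p ω : ℂ) * Rm (Ym fun p => xs X N p ω) z p.2 p.1 ∂P := by
        rw [integral_const_mul, integral_finsetSum _ (fun p _ => hint p)]
    _ = 2 * (Real.sqrt N : ℂ)⁻¹ * ∑ p : Fin N × Fin N, ∫ ω, -((Real.sqrt N)⁻¹ : ℂ) * ((cx (Kmat N) * Rm (Ym fun p => xs X N p ω) z) p.1 p.2 * (cx (Kmat N) * Rm (Ym fun p => xs X N p ω) z) p.2 p.1 +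
      (cx (Kmat N) * Rm (Ym fun p => xs X N p ω) z) p.2 p.2 * (cx (Kmat N) * Rm (Ym fun p => xs X N p ω) z) p.1 p.1) ∂P := by
        rw [Finset.sum_congr rfl fun p _ => hkey p]
    _ = 2 * (Real.sqrt N : ℂ)⁻¹ * ∫ ω, ∑ p : Fin N × Fin N, -((Real.sqrt N)⁻¹ : ℂ) * ((cx (Kmat N) * Rm (Ym fun p => xs X N p ω) z) p.1 p.2 * (cx (Kmat N) * Rm (Ym fun p => xs X N p ω) z) p.2 p.1 +
      (cx (Kmat N) * Rm (Ym fun p => xs X N p ω) z) p.2 p.2 * (cx (Kmat N) * Rm (Ym fun p => xs X N p ω) z) p.1 p.1) ∂P := by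
        rw [← integral_finsetSum]
        intro p _
        exact ((hint2 _ _ _ _).add (hint2 _ _ _ _)).const_mul _
    _ = 2 * (Real.sqrt N : ℂ)⁻¹ * ∫ ω, -((Real.sqrt N)⁻¹ : ℂ) * ((cx (Kmat N) * Rm (Ym fun p => xs X N p ω) z).trace ^ 2 +
        (cx (Kmat N) * Rm (Ym fun p => xs X N p ω) z * (cx (Kmat N) * Rm (Ym fun p => xs X N p ω) z)).trace) ∂P := by
        congr 1
        refine integral_congr_ae (ae_of_all _ fun ω => ?_)
        simp only
        rw [← Finset.mul_sum, sum_pair_trace]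
    _ = _ := by
        rw [integral_const_mul, ← mul_assoc, hc]

def Qmat (N : ℕ) : Matrix (Fin N) (Fin N) ℝ := (2 * π) • (1 : Matrix (Fin N) (Fin N) ℝ) - Kmat N

lemma Y_int (hX : StatGauss P X) (N : ℕ) (a b c d : Fin N) :
    Integrable (fun ω => scaledW X N ω a b * scaledW X N ω c d) P := by
  have h : ∀ p, MemLp (xs X N p) 2 P := fun p => ((xs_gauss P X hX N).eval p).memLp_two
  have h2 : ∀ a b, MemLp (fun ω => scaledW X N ω a b) 2 P := fun a b =>
    ((h (a, b)).add (h (b, a))).const_mul _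
  exact (h2 a b).integrable_mul (h2 c d)

lemma Y_cov (hX : StatGauss P X)
    (hXf : HasSpecDensity P X (fun q =>
      if q.1 ∈ Set.Icc (-(π / 2)) (π / 2) ∧ q.2 ∈ Set.Icc (-(π / 2)) (π / 2)
      then 1 else 0)) (N : ℕ) (k l j : Fin N) :
    ∫ ω, scaledW X N ω k j * scaledW X N ω l j ∂P =
      2 * (N : ℝ)⁻¹ * (π * Kmat N k l + Kmat N k j * Kmat N l j) := by
  have h : ∀ p, MemLp (xs X N p) 2 P := fun p => ((xs_gauss P X hX N).eval p).memLp_two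
  have hi : ∀ p q, Integrable (fun ω => xs X N p ω * xs X N q ω) P := fun p q => (h p).integrable_mul (h q)
  have e : ∀ ω, scaledW X N ω k j * scaledW X N ω l j = (N : ℝ)⁻¹ *
    (xs X N (k, j) ω * xs X N (l, j) ω + xs X N (k, j) ω * xs X N (j, l) ω +
      (xs X N (j, k) ω * xs X N (l, j) ω + xs X N (j, k) ω * xs X N (j, l) ω)) := by
    intro ω
    rw [scaledW_eq]
    have : (N : ℝ)⁻¹ = (Real.sqrt N)⁻¹ * (Real.sqrt N)⁻¹ := by
      rw [← mul_inv, Real.mul_self_sqrt (Nat.cast_nonneg _)]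
    rw [this]
    simp only [Ym]; ring
  simp_rw [e]
  have hi2 : ∀ p q p' q', Integrable (fun ω => xs X N p ω * xs X N q ω + xs X N p' ω * xs X N q' ω) P :=
    fun p q p' q' => (hi p q).add (hi p' q')
  rw [integral_const_mul, integral_add (hi2 _ _ _ _) (hi2 _ _ _ _),
    integral_add (hi _ _) (hi _ _), integral_add (hi _ _) (hi _ _)]
  simp only [xs_cov P X hX hXf]
  have hj : Kmat N j j = π := by simp [Kmat, kr_zero]
  rw [hj, Kmat_symm N j l, Kmat_symm N k j]
  ring

lemma QY_int (hX : StatGauss P X)  (N : ℕ) :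
    Integrable (fun ω => ∑ i, ∑ j, (Qmat N * scaledW X N ω) i j ^ 2) P := by
  refine integrable_finsetSum _ fun i _ => integrable_finsetSum _ fun j _ => ?_
  simp_rw [Matrix.mul_apply, sq, Finset.sum_mul_sum]
  refine integrable_finsetSum _ fun k _ => integrable_finsetSum _ fun l _ => ?_
  refine ((Y_int P X hX N k j l j).const_mul (Qmat N i k * Qmat N i l)).congr (ae_of_all _ fun ω => ?_)
  ring

lemma QY_second (hX : StatGauss P X)
    (hXf : HasSpecDensity P X (fun q =>
      if q.1 ∈ Set.Icc (-(π / 2)) (π / 2) ∧ q.2 ∈ Set.Icc (-(π / 2)) (π / 2)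
      then 1 else 0)) (N : ℕ) (hN : 0 < N) :
    ∫ ω, ∑ i, ∑ j, (Qmat N * scaledW X N ω) i j ^ 2 ∂P ≤ 12 * π ^ 2 * (Dmat N).trace := by
  have hQs : ∀ i j, Qmat N i j = Qmat N j i := by
    intro i j
    have := (Kmat_psd' N).isHermitian
    have := congrFun (congrFun this.eq i) j
    simpa [Qmat] using this.symm
  have hterm : ∀ i j k l, Integrable (fun ω => Qmat N i k * scaledW X N ω k j * (Qmat N i l * scaledW X N ω l j)) P := by
    intro i j k l
    refine ((Y_int P X hX N k j l j).const_mul (Qmat N i k * Qmat N i l)).congr (ae_of_all _ fun ω => ?_)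
    ring
  have e1 : ∫ ω, ∑ i, ∑ j, (Qmat N * scaledW X N ω) i j ^ 2 ∂P =
      ∑ i, ∑ j, ∑ k, ∑ l, Qmat N i k * Qmat N i l * (2 * (N : ℝ)⁻¹ * (π * Kmat N k l + Kmat N k j * Kmat N l j)) := by
    simp_rw [Matrix.mul_apply, sq, Finset.sum_mul_sum]
    rw [integral_finsetSum _ fun i _ => integrable_finsetSum _ fun j _ => integrable_finsetSum _ fun k _ =>
      integrable_finsetSum _ fun l _ => hterm i j k l]
    refine Finset.sum_congr rfl fun i _ => ?_
    rw [integral_finsetSum _ fun j _ => integrable_finsetSum _ fun k _ =>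
      integrable_finsetSum _ fun l _ => hterm i j k l]
    refine Finset.sum_congr rfl fun j _ => ?_
    rw [integral_finsetSum _ fun k _ =>
      integrable_finsetSum _ fun l _ => hterm i j k l]
    refine Finset.sum_congr rfl fun k _ => ?_
    rw [integral_finsetSum _ fun l _ => hterm i j k l]
    refine Finset.sum_congr rfl fun l _ => ?_
    rw [← Y_cov P X hX hXf, ← integral_const_mul]
    congr 1; ext ω; ring
  have e2 : ∑ i, ∑ j, ∑ k, ∑ l, Qmat N i k * Qmat N i l * (2 * (N : ℝ)⁻¹ * (π * Kmat N k l + Kmat N k j * Kmat N l j))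
      = 2 * π * (Qmat N * Kmat N * Qmat N).trace + 2 * (N : ℝ)⁻¹ * (Qmat N * (Kmat N * Kmat N) * Qmat N).trace := by
    have f1 : (Qmat N * Kmat N * Qmat N).trace = ∑ i, ∑ k, ∑ l, Qmat N i k * Qmat N i l * Kmat N k l := by
      simp only [Matrix.trace, Matrix.diag_apply, Matrix.mul_apply, Finset.sum_mul]
      refine Finset.sum_congr rfl fun i _ => ?_
      rw [Finset.sum_comm]
      refine Finset.sum_congr rfl fun k _ => Finset.sum_congr rfl fun l _ => ?_
      rw [hQs l i]; ring
    have f2 : (Qmat N * (Kmat N * Kmat N) * Qmat N).trace = ∑ i, ∑ j, ∑ k, ∑ l, Qmat N i k * Qmat N i l * (Kmat N k j * Kmat N l j) := by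
      rw [← Matrix.mul_assoc, Matrix.mul_assoc]
      simp only [Matrix.trace, Matrix.diag_apply]
      refine Finset.sum_congr rfl fun i _ => ?_
      rw [Matrix.mul_apply]
      refine Finset.sum_congr rfl fun j _ => ?_
      rw [Matrix.mul_apply, Matrix.mul_apply, Finset.sum_mul_sum]
      refine Finset.sum_congr rfl fun k _ => Finset.sum_congr rfl fun l _ => ?_
      rw [hQs l i, Kmat_symm N j l]; ring
    have g : ∀ i j k l, Qmat N i k * Qmat N i l * (2 * (N : ℝ)⁻¹ * (π * Kmat N k l + Kmat N k j * Kmat N l j)) =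
      2 * π * (N : ℝ)⁻¹ * (Qmat N i k * Qmat N i l * Kmat N k l) + 2 * (N : ℝ)⁻¹ * (Qmat N i k * Qmat N i l * (Kmat N k j * Kmat N l j)) := by
      intros; ring
    simp_rw [g, Finset.sum_add_distrib, ← Finset.mul_sum]
    rw [← f2]
    congr 1
    rw [f1]
    simp only [Finset.sum_const, Finset.card_univ, Fintype.card_fin, nsmul_eq_mul, ← Finset.mul_sum]
    field_simp
  rw [e1, e2]
  have hK := Kmat_psd N
  have hQ : (Qmat N).PosSemidef := Kmat_psd' N
  have hD := Dmat_psd N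
  have t1 := (hQ.conjTranspose_mul_mul_same (Kmat N)).trace_nonneg
  have t2 := (hD.conjTranspose_mul_mul_same (Qmat N)).trace_nonneg
  rw [hK.isHermitian.eq] at t1
  rw [hQ.isHermitian.eq] at t2
  have i1 : Qmat N * Kmat N * Qmat N = (2 * π) • Dmat N - Kmat N * Qmat N * Kmat N := by
    rw [Qmat, Dmat]
    simp only [mul_sub, sub_mul, Matrix.mul_smul, Matrix.smul_mul, Matrix.mul_one, Matrix.one_mul, smul_sub, Matrix.mul_assoc]
  have i2 : Qmat N * (Kmat N * Kmat N) * Qmat N = (2 * π) • (Qmat N * Kmat N * Qmat N) - Qmat N * Dmat N * Qmat N := by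
    rw [Dmat]
    simp only [mul_sub, sub_mul, Matrix.mul_smul, Matrix.smul_mul]
    module
  have j1 : (Qmat N * Kmat N * Qmat N).trace ≤ 2 * π * (Dmat N).trace := by
    rw [i1, Matrix.trace_sub, Matrix.trace_smul, smul_eq_mul]; linarith
  have j2 : (Qmat N * (Kmat N * Kmat N) * Qmat N).trace ≤ 2 * π * (2 * π * (Dmat N).trace) := by
    rw [i2, Matrix.trace_sub, Matrix.trace_smul, smul_eq_mul]
    have := mul_le_mul_of_nonneg_left j1 (by positivity : 0 ≤ 2 * π)
    linarith
  have hn1 : (N : ℝ)⁻¹ ≤ 1 := inv_le_one_of_one_le₀ (by exact_mod_cast hN)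
  have hD0 := hD.trace_nonneg
  calc _ ≤ 2 * π * (2 * π * (Dmat N).trace) + 2 * (N : ℝ)⁻¹ * (2 * π * (2 * π * (Dmat N).trace)) := by gcongr
    _ ≤ 2 * π * (2 * π * (Dmat N).trace) + 2 * 1 * (2 * π * (2 * π * (Dmat N).trace)) := by gcongr
    _ = _ := by ring

end

section
variable {Ω : Type} [MeasurableSpace Ω] (P : Measure Ω) [IsProbabilityMeasure P]

lemma L1_of_L2 (f : ℕ → Ω → ℂ) (hf : ∀ N, Measurable (f N)) (C : ℝ) (hC : ∀ N ω, ‖f N ω‖ ≤ C)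
    (h : Tendsto (fun N => ∫ ω, ‖f N ω‖ ^ 2 ∂P) atTop (nhds 0)) :
    Tendsto (fun N => ∫ ω, ‖f N ω‖ ∂P) atTop (nhds 0) := by
  have h1 : ∀ N, ∫ ω, ‖f N ω‖ ∂P ≤ Real.sqrt (∫ ω, ‖f N ω‖ ^ 2 ∂P) := by
    intro N
    apply Real.le_sqrt_of_sq_le
    have hm : MemLp (fun ω => ‖f N ω‖) 2 P :=
      MemLp.of_bound (hf N).norm.aestronglyMeasurable C (ae_of_all _ fun ω => by simpa using hC N ω)
    have := variance_eq_sub hm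
    have h0 := variance_nonneg (fun ω => ‖f N ω‖) P
    simp only [Pi.pow_apply] at this
    linarith
  refine squeeze_zero (fun N => integral_nonneg fun _ => norm_nonneg _) h1 ?_
  have := (Real.continuous_sqrt.tendsto 0).comp h
  rw [Real.sqrt_zero] at this
  exact this

lemma L2_of_prob (f : ℕ → Ω → ℝ) (hf : ∀ N, Measurable (f N)) (C : ℝ) (hC : ∀ N ω, |f N ω| ≤ C)
    (h : ∀ ε > 0, Tendsto (fun N => P {ω | ε ≤ |f N ω|}) atTop (nhds 0)) :
    Tendsto (fun N => ∫ ω, f N ω ^ 2 ∂P) atTop (nhds 0) := by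
  rw [Metric.tendsto_atTop]
  intro e he
  set d := Real.sqrt (e / 2)
  have hd : 0 < d := Real.sqrt_pos.2 (by linarith)
  have hd2 : d ^ 2 = e / 2 := Real.sq_sqrt (by linarith)
  have h1 : Tendsto (fun N => C ^ 2 * (P {ω | d ≤ |f N ω|}).toReal) atTop (nhds 0) := by
    have := ((ENNReal.tendsto_toReal ENNReal.zero_ne_top).comp (h d hd)).const_mul (C ^ 2)
    simpa using this
  obtain ⟨N0, hN0⟩ := Metric.tendsto_atTop.1 h1 (e / 2) (by linarith)
  refine ⟨N0, fun N hN => ?_⟩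
  have h2 := hN0 N hN
  rw [Real.dist_eq, sub_zero] at h2 ⊢
  have hS : MeasurableSet {ω | d ≤ |f N ω|} := measurableSet_le measurable_const (hf N).abs
  have h3 : ∫ ω, f N ω ^ 2 ∂P ≤ ∫ ω, (d ^ 2 + Set.indicator {ω | d ≤ |f N ω|} (fun _ => C ^ 2) ω) ∂P := by
    have hi : Integrable (fun ω => d ^ 2 + Set.indicator {ω | d ≤ |f N ω|} (fun _ => C ^ 2) ω) P :=
      (integrable_const _).add ((integrable_const _).indicator hS)
    refine integral_mono_of_nonneg (ae_of_all _ fun _ => sq_nonneg _) hi (ae_of_all _ fun ω => ?_)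
    simp only [Set.indicator, Set.mem_ofPred_eq]
    split_ifs with h
    · have : f N ω ^ 2 ≤ C ^ 2 := sq_le_sq.2 ((hC N ω).trans (le_abs_self _))
      nlinarith [sq_nonneg d]
    · have : f N ω ^ 2 ≤ d ^ 2 := sq_le_sq.2 ((not_le.1 h).le.trans (le_abs_self _))
      linarith
  have h4 : ∫ ω, (d ^ 2 + Set.indicator {ω | d ≤ |f N ω|} (fun _ => C ^ 2) ω) ∂P = e / 2 + C ^ 2 * (P {ω | d ≤ |f N ω|}).toReal := by
    rw [integral_add (integrable_const _) ((integrable_const _).indicator hS), integral_indicator hS]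
    simp [hd2, Measure.real, mul_comm]
  rw [abs_of_nonneg (integral_nonneg fun _ => sq_nonneg _)]
  have := le_abs_self (C ^ 2 * (P {ω | d ≤ |f N ω|}).toReal)
  linarith

variable (X : ℤ → ℤ → Ω → ℝ)

def aN (z : ℂ) (N : ℕ) (ω : Ω) : ℂ := (N : ℂ)⁻¹ * (Rm (scaledW X N ω) z).trace
def tN (z : ℂ) (N : ℕ) (ω : Ω) : ℂ := (N : ℂ)⁻¹ * (cx (Kmat N) * Rm (scaledW X N ω) z).trace

lemma aN_meas (hX : StatGauss P X) {z : ℂ} (hz : 0 < z.im) (N : ℕ) : Measurable (aN X z N) := by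
  have hRc : Continuous (fun y : Fin N × Fin N → ℝ => Rm (Ym y) z) := Rm_continuous _ Ym_herm Ym_cont hz
  have hm : Measurable (fun y : Fin N × Fin N → ℝ => (N : ℂ)⁻¹ * (Rm (Ym y) z).trace) :=
    (continuous_const.mul hRc.matrix_trace).measurable
  have h2 := hm.comp (xs_meas P X hX N)
  convert h2 using 1
  funext ω
  simp only [aN, Function.comp_apply, scaledW_eq]

lemma tN_meas (hX : StatGauss P X) {z : ℂ} (hz : 0 < z.im) (N : ℕ) : Measurable (tN X z N) := by
  have hRc : Continuous (fun y : Fin N × Fin N → ℝ => Rm (Ym y) z) := Rm_continuous _ Ym_herm Ym_cont hz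
  have hcc : Continuous (fun y : Fin N × Fin N → ℝ => cx (Kmat N) * Rm (Ym y) z) := continuous_const.matrix_mul hRc
  have hm : Measurable (fun y : Fin N × Fin N → ℝ => (N : ℂ)⁻¹ * (cx (Kmat N) * Rm (Ym y) z).trace) :=
    (continuous_const.mul hcc.matrix_trace).measurable
  have h2 := hm.comp (xs_meas P X hX N)
  convert h2 using 1
  funext ω
  simp only [tN, Function.comp_apply, scaledW_eq]

lemma sW_herm (N : ℕ) (ω : Ω) : (scaledW X N ω).IsHermitian := by
  rw [scaledW_eq]; exact Ym_herm _

lemma inv_mul_le_of (N : ℕ) (c : ℝ) (hc : 0 ≤ c) : (N : ℝ)⁻¹ * (N * c) ≤ c := by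
  rcases Nat.eq_zero_or_pos N with h | h
  · simp [h, hc]
  · have : (N : ℝ) ≠ 0 := by positivity
    rw [inv_mul_cancel_left₀ this]

lemma aN_bdd {z : ℂ} (hz : 0 < z.im) (N : ℕ) (ω : Ω) : ‖aN X z N ω‖ ≤ z.im⁻¹ := by
  have h := (Rm_psd (sW_herm X N ω) hz (Matrix.PosSemidef.one : (1 : Matrix (Fin N) (Fin N) ℝ).PosSemidef)).1
  rw [cx_one, one_mul] at h
  simp only [Matrix.trace_one, Fintype.card_fin] at h
  rw [aN, norm_mul, norm_inv, Complex.norm_natCast]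
  refine le_trans ?_ (inv_mul_le_of N z.im⁻¹ (by positivity))
  rw [mul_comm (N : ℝ) (z.im⁻¹)]
  gcongr

lemma tN_bdd {z : ℂ} (hz : 0 < z.im) (N : ℕ) (ω : Ω) : ‖tN X z N ω‖ ≤ π * z.im⁻¹ := by
  have h := (Rm_psd (sW_herm X N ω) hz (Kmat_psd N)).1
  rw [Kmat_trace] at h
  rw [tN, norm_mul, norm_inv, Complex.norm_natCast]
  refine le_trans ?_ (inv_mul_le_of N (π * z.im⁻¹) (by positivity))
  have : (N : ℝ) * (π * z.im⁻¹) = z.im⁻¹ * (N * π) := by ring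
  rw [this]
  gcongr

lemma tN_im {z : ℂ} (hz : 0 < z.im) (N : ℕ) (ω : Ω) : 0 ≤ (tN X z N ω).im := by
  have h := (Rm_psd (sW_herm X N ω) hz (Kmat_psd N)).2
  have e : tN X z N ω = (((N : ℝ)⁻¹ : ℝ) : ℂ) * (cx (Kmat N) * Rm (scaledW X N ω) z).trace := by
    simp [tN]
  rw [e, Complex.im_ofReal_mul]
  positivity

lemma rN_eq {z : ℂ} (hz : 0 < z.im) (N : ℕ) (hN : 0 < N) (ω : Ω) :
    (N : ℂ)⁻¹ * (cx (Qmat N * scaledW X N ω) * Rm (scaledW X N ω) z).trace =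
      π + 2 * π * z * aN X z N ω - z * tN X z N ω := by
  have hN' : (N : ℂ) ≠ 0 := by exact_mod_cast hN.ne'
  rw [cx_mul, Matrix.mul_assoc, Rm_mul (sW_herm X N ω) hz, mul_add, mul_one, Matrix.trace_add, cx_trace]
  have hq : (Qmat N).trace = N * π := by
    rw [Qmat, Matrix.trace_sub, Matrix.trace_smul, Matrix.trace_one, Kmat_trace]; simp; ring
  rw [hq, Matrix.mul_smul, Matrix.trace_smul, Qmat, cx_sub, cx_smul, cx_one, sub_mul, Matrix.trace_sub, Matrix.smul_mul, Matrix.trace_smul, one_mul, aN, tN]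
  simp only [smul_eq_mul]
  push_cast
  field_simp
  ring

lemma aN_esd {z : ℂ} (hz : 0 < z.im) (N : ℕ) (ω : Ω) :
    (aN X z N ω).re = esdEval (scaledW X N ω) (fun x => ((x - z : ℂ)⁻¹).re) ∧
    (aN X z N ω).im = esdEval (scaledW X N ω) (fun x => ((x - z : ℂ)⁻¹).im) := by
  have e : aN X z N ω = (((N : ℝ)⁻¹ : ℝ) : ℂ) * ∑ j, (((sW_herm X N ω).eigenvalues j : ℂ) - z)⁻¹ := by
    rw [aN, Rm_trace (sW_herm X N ω) hz]; simp
  unfold esdEval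
  rw [dif_pos (sW_herm X N ω), dif_pos (sW_herm X N ω), e]
  constructor
  · rw [Complex.re_ofReal_mul, Complex.re_sum]
  · rw [Complex.im_ofReal_mul, Complex.im_sum]
end

lemma stj_cont {z : ℂ} (hz : 0 < z.im) : Continuous (fun x : ℝ => ((x : ℂ) - z)⁻¹) :=
  Continuous.inv₀ (by fun_prop) (fun x => sub_ne hz x)

lemma stj_int {z : ℂ} (hz : 0 < z.im) (μ : Measure ℝ) [IsFiniteMeasure μ] :
    Integrable (fun x : ℝ => ((x : ℂ) - z)⁻¹) μ :=
  Integrable.of_bound (stj_cont hz).aestronglyMeasurable z.im⁻¹ (ae_of_all _ fun x => norm_inv_le hz x)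

section
variable {Ω : Type} [MeasurableSpace Ω] (P : Measure Ω) [IsProbabilityMeasure P]
variable (X : ℤ → ℤ → Ω → ℝ)

lemma bdd_int {E : Type} [NormedAddCommGroup E] [MeasurableSpace E] [BorelSpace E] [SecondCountableTopology E]
    (f : Ω → E) (hf : Measurable f) (C : ℝ) (hC : ∀ ω, ‖f ω‖ ≤ C) : Integrable f P :=
  Integrable.of_bound hf.aestronglyMeasurable C (ae_of_all _ hC)

lemma aN_L2 (hX : StatGauss P X) (μf : Measure ℝ) [IsProbabilityMeasure μf]
    (hconv : ESDTendstoInProb P (scaledW X) μf) {z : ℂ} (hz : 0 < z.im) :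
    Tendsto (fun N => ∫ ω, ‖aN X z N ω - ∫ x : ℝ, ((x : ℂ) - z)⁻¹ ∂μf‖ ^ 2 ∂P) atTop (nhds 0) := by
  have hgi := stj_int hz μf
  set g := ∫ x : ℝ, ((x : ℂ) - z)⁻¹ ∂μf with hg
  have hre : ∫ x : ℝ, (((x : ℂ) - z)⁻¹).re ∂μf = g.re := Complex.reCLM.integral_comp_comm hgi
  have him : ∫ x : ℝ, (((x : ℂ) - z)⁻¹).im ∂μf = g.im := Complex.imCLM.integral_comp_comm hgi
  have hm := fun N => (aN_meas P X hX hz N).sub_const g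
  have hb : ∀ N ω, ‖aN X z N ω - g‖ ≤ z.im⁻¹ + ‖g‖ := fun N ω =>
    (norm_sub_le _ _).trans (by gcongr; exact aN_bdd X hz N ω)
  have h1 := L2_of_prob P (fun N ω => (aN X z N ω - g).re) (fun N => Complex.measurable_re.comp (hm N)) (z.im⁻¹ + ‖g‖)
    (fun N ω => (Complex.abs_re_le_norm _).trans (hb N ω)) (by
      intro ε he
      have := hconv (fun x => (((x : ℂ) - z)⁻¹).re) (Complex.continuous_re.comp (stj_cont hz))
        ⟨z.im⁻¹, fun x => (Complex.abs_re_le_norm _).trans (norm_inv_le hz x)⟩ ε he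
      rw [hre] at this
      simpa only [← (aN_esd X hz _ _).1, ← Complex.sub_re] using this)
  have h2 := L2_of_prob P (fun N ω => (aN X z N ω - g).im) (fun N => Complex.measurable_im.comp (hm N)) (z.im⁻¹ + ‖g‖)
    (fun N ω => (Complex.abs_im_le_norm _).trans (hb N ω)) (by
      intro ε he
      have := hconv (fun x => (((x : ℂ) - z)⁻¹).im) (Complex.continuous_im.comp (stj_cont hz))
        ⟨z.im⁻¹, fun x => (Complex.abs_im_le_norm _).trans (norm_inv_le hz x)⟩ ε he
      rw [him] at this
      simpa only [← (aN_esd X hz _ _).2, ← Complex.sub_im] using this)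
  have h3 := h1.add h2
  rw [add_zero] at h3
  refine h3.congr fun N => ?_
  have hi : ∀ u : Ω → ℝ, Measurable u → (∀ ω, |u ω| ≤ z.im⁻¹ + ‖g‖) → Integrable (fun ω => u ω ^ 2) P := by
    intro u hu hb
    refine bdd_int P _ (hu.pow_const 2) ((z.im⁻¹ + ‖g‖) ^ 2) (fun ω => ?_)
    rw [norm_pow]
    exact pow_le_pow_left₀ (norm_nonneg _) (hb ω) 2
  rw [← integral_add]
  · congr 1; ext ω
    rw [Complex.sq_norm, Complex.normSq_apply]; ring
  · exact hi _ (Complex.measurable_re.comp (hm N)) (fun ω => (Complex.abs_re_le_norm _).trans (hb N ω))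
  · exact hi _ (Complex.measurable_im.comp (hm N)) (fun ω => (Complex.abs_im_le_norm _).trans (hb N ω))

lemma rN_L2 (hX : StatGauss P X)
    (hXf : HasSpecDensity P X (fun q =>
      if q.1 ∈ Set.Icc (-(π / 2)) (π / 2) ∧ q.2 ∈ Set.Icc (-(π / 2)) (π / 2)
      then 1 else 0)) {z : ℂ} (hz : 0 < z.im) :
    Tendsto (fun N => ∫ ω, ‖π + 2 * π * z * aN X z N ω - z * tN X z N ω‖ ^ 2 ∂P) atTop (nhds 0) := by
  have h0 := Dmat_tendsto.const_mul (z.im⁻¹ ^ 2 * (12 * π ^ 2))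
  rw [mul_zero] at h0
  refine squeeze_zero' (Eventually.of_forall fun N => integral_nonneg fun _ => sq_nonneg _) ?_ h0
  filter_upwards [eventually_gt_atTop 0] with N hN
  have hN' : (N : ℝ) ≠ 0 := by positivity
  have h1 : ∀ ω, ‖π + 2 * π * z * aN X z N ω - z * tN X z N ω‖ ^ 2 ≤
      z.im⁻¹ ^ 2 * (N : ℝ)⁻¹ * ∑ i, ∑ j, (Qmat N * scaledW X N ω) i j ^ 2 := by
    intro ω
    rw [← rN_eq X hz N hN, norm_mul, norm_inv, Complex.norm_natCast, mul_pow]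
    have := Rm_frob (sW_herm X N ω) hz (Qmat N * scaledW X N ω)
    calc _ ≤ (N : ℝ)⁻¹ ^ 2 * (z.im⁻¹ ^ 2 * (N * ∑ i, ∑ j, (Qmat N * scaledW X N ω) i j ^ 2)) := by gcongr
      _ = _ := by field_simp
  calc _ ≤ ∫ ω, z.im⁻¹ ^ 2 * (N : ℝ)⁻¹ * ∑ i, ∑ j, (Qmat N * scaledW X N ω) i j ^ 2 ∂P :=
        integral_mono_of_nonneg (ae_of_all _ fun _ => sq_nonneg _) ((QY_int P X hX N).const_mul _) (ae_of_all _ h1)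
    _ = z.im⁻¹ ^ 2 * (N : ℝ)⁻¹ * ∫ ω, ∑ i, ∑ j, (Qmat N * scaledW X N ω) i j ^ 2 ∂P := integral_const_mul _ _
    _ ≤ z.im⁻¹ ^ 2 * (N : ℝ)⁻¹ * (12 * π ^ 2 * (Dmat N).trace) := by
        gcongr
        exact QY_second P X hX hXf N hN
    _ = _ := by ring

lemma E_of_L1 (f : ℕ → Ω → ℂ) (hf : ∀ N, Integrable (f N) P) (c : ℂ)
    (h : Tendsto (fun N => ∫ ω, ‖f N ω - c‖ ∂P) atTop (nhds 0)) :
    Tendsto (fun N => ∫ ω, f N ω ∂P) atTop (nhds c) := by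
  rw [tendsto_iff_norm_sub_tendsto_zero]
  refine squeeze_zero (fun _ => norm_nonneg _) (fun N => ?_) h
  have : ∫ ω, f N ω ∂P - c = ∫ ω, (f N ω - c) ∂P := by
    rw [integral_sub (hf N) (integrable_const _)]; simp
  rw [this]
  exact norm_integral_le_integral_norm _

lemma limit_eq (hX : StatGauss P X)
    (hXf : HasSpecDensity P X (fun q =>
      if q.1 ∈ Set.Icc (-(π / 2)) (π / 2) ∧ q.2 ∈ Set.Icc (-(π / 2)) (π / 2)
      then 1 else 0)) (μf : Measure ℝ) [IsProbabilityMeasure μf]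
    (hconv : ESDTendstoInProb P (scaledW X) μf) {z : ℂ} (hz : 0 < z.im) :
    ∃ T : ℂ, z * T = 2 * π * z * (∫ x : ℝ, ((x : ℂ) - z)⁻¹ ∂μf) + π ∧
      1 + z * (∫ x : ℝ, ((x : ℂ) - z)⁻¹ ∂μf) = -2 * T ^ 2 ∧ 0 ≤ T.im := by
  have ha2 := aN_L2 P X hX μf hconv hz
  have hr2 := rN_L2 P X hX hXf hz
  set g := ∫ x : ℝ, ((x : ℂ) - z)⁻¹ ∂μf with hg
  have hz0 : z ≠ 0 := by rintro rfl; simp at hz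
  have hzi : 0 ≤ z.im⁻¹ := by positivity
  set T : ℂ := 2 * π * g + π / z with hT
  have hzT : z * T = 2 * π * z * g + π := by rw [hT]; field_simp
  have hma := aN_meas P X hX hz
  have hmt := tN_meas P X hX hz
  have hab := aN_bdd X hz
  have htb := tN_bdd X hz
  have ha1 : Tendsto (fun N => ∫ ω, ‖aN X z N ω - g‖ ∂P) atTop (nhds 0) :=
    L1_of_L2 P (fun N ω => aN X z N ω - g) (fun N => (hma N).sub_const g) (z.im⁻¹ + ‖g‖)
      (fun N ω => (norm_sub_le _ _).trans (by gcongr; exact hab N ω)) ha2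
  have hrm : ∀ N, Measurable (fun ω => π + 2 * π * z * aN X z N ω - z * tN X z N ω) := fun N =>
    (((hma N).const_mul _).const_add _).sub ((hmt N).const_mul _)
  have hrb : ∀ N ω, ‖π + 2 * π * z * aN X z N ω - z * tN X z N ω‖ ≤
      π + ‖2 * π * z‖ * z.im⁻¹ + ‖z‖ * (π * z.im⁻¹) := by
    intro N ω
    refine (norm_sub_le _ _).trans (add_le_add ((norm_add_le _ _).trans (add_le_add ?_ ?_)) ?_)
    · rw [Complex.norm_real, Real.norm_of_nonneg pi_pos.le]
    · rw [norm_mul]; gcongr; exact hab N ω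
    · rw [norm_mul]; gcongr; exact htb N ω
  have hr1 := L1_of_L2 P _ hrm _ hrb hr2
  have hsm : ∀ N, Measurable (fun ω => tN X z N ω - T) := fun N => (hmt N).sub_const T
  have hsb : ∀ N ω, ‖tN X z N ω - T‖ ≤ π * z.im⁻¹ + ‖T‖ := fun N ω =>
    (norm_sub_le _ _).trans (by gcongr; exact htb N ω)
  have ht1 : Tendsto (fun N => ∫ ω, ‖tN X z N ω - T‖ ∂P) atTop (nhds 0) := by
    have h := ((ha1.const_mul (‖2 * π * z‖)).add hr1).const_mul (‖z‖⁻¹)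
    simp only [mul_zero, add_zero] at h
    refine squeeze_zero (fun _ => integral_nonneg fun _ => norm_nonneg _) (fun N => ?_) h
    have hi1 : Integrable (fun ω => ‖aN X z N ω - g‖) P :=
      (bdd_int P _ ((hma N).sub_const g) (z.im⁻¹ + ‖g‖)
        (fun ω => (norm_sub_le _ _).trans (by gcongr; exact hab N ω))).norm
    have hi2 := (bdd_int P _ (hrm N) _ (hrb N)).norm
    rw [← integral_const_mul, ← integral_add (hi1.const_mul _) hi2, ← integral_const_mul]
    refine integral_mono (bdd_int P _ (hsm N) _ (hsb N)).norm (((hi1.const_mul _).add hi2).const_mul _) fun ω => ?_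
    simp only
    have e : tN X z N ω - T = z⁻¹ * (2 * π * z * (aN X z N ω - g) - (π + 2 * π * z * aN X z N ω - z * tN X z N ω)) := by
      rw [hT]; field_simp; ring
    rw [e, norm_mul, norm_inv]
    gcongr
    refine (norm_sub_le _ _).trans ?_
    rw [norm_mul]
  have hti : ∀ N, Integrable (tN X z N) P := fun N => bdd_int P _ (hmt N) _ (htb N)
  have hEt := E_of_L1 P (tN X z) hti T ht1
  have hai : ∀ N, Integrable (aN X z N) P := fun N => bdd_int P _ (hma N) _ (hab N)
  have hEa := E_of_L1 P (aN X z) hai g ha1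
  have ht2b : ∀ N ω, ‖tN X z N ω ^ 2‖ ≤ (π * z.im⁻¹) ^ 2 := fun N ω => by
    rw [norm_pow]; exact pow_le_pow_left₀ (norm_nonneg _) (htb N ω) 2
  have hti2 : ∀ N, Integrable (fun ω => tN X z N ω ^ 2) P := fun N => bdd_int P _ ((hmt N).pow_const 2) _ (ht2b N)
  have hEt2 : Tendsto (fun N => ∫ ω, tN X z N ω ^ 2 ∂P) atTop (nhds (T ^ 2)) := by
    refine E_of_L1 P (fun N ω => tN X z N ω ^ 2) hti2 _ ?_
    have h := ht1.const_mul (π * z.im⁻¹ + ‖T‖)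
    rw [mul_zero] at h
    refine squeeze_zero (fun _ => integral_nonneg fun _ => norm_nonneg _) (fun N => ?_) h
    rw [← integral_const_mul]
    refine integral_mono ((hti2 N).sub (integrable_const _)).norm ((bdd_int P _ (hsm N) _ (hsb N)).norm.const_mul _) fun ω => ?_
    simp only
    have e : tN X z N ω ^ 2 - T ^ 2 = (tN X z N ω + T) * (tN X z N ω - T) := by ring
    rw [e, norm_mul]
    gcongr
    exact (norm_add_le _ _).trans (by gcongr; exact htb N ω)
  refine ⟨T, hzT, ?_, ?_⟩
  · have hL : Tendsto (fun N => 1 + z * ∫ ω, aN X z N ω ∂P) atTop (nhds (1 + z * g)) :=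
      (hEa.const_mul z).const_add 1
    have hE : Tendsto (fun N => (1 + z * ∫ ω, aN X z N ω ∂P) - (-2 * ∫ ω, tN X z N ω ^ 2 ∂P)) atTop (nhds 0) := by
      rw [tendsto_zero_iff_norm_tendsto_zero]
      have h0 : Tendsto (fun N : ℕ => (4 * π ^ 2 * z.im⁻¹ ^ 2) * ((N : ℝ))⁻¹) atTop (nhds 0) := by
        have := (tendsto_inv_atTop_zero.comp (tendsto_natCast_atTop_atTop (R := ℝ))).const_mul (4 * π ^ 2 * z.im⁻¹ ^ 2)
        rw [mul_zero] at this
        exact this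
      refine squeeze_zero' (Eventually.of_forall fun _ => norm_nonneg _) ?_ h0
      filter_upwards [eventually_gt_atTop 0] with N hN
      have hN' : (N : ℂ) ≠ 0 := by exact_mod_cast hN.ne'
      have hNr : (N : ℝ) ≠ 0 := by exact_mod_cast hN.ne'
      have hib := ibp_trace P X hX hXf N hz
      have hk2 : ∑ i, ∑ j, Kmat N i j ^ 2 ≤ 2 * π * (N * π) := by
        rw [← K2_trace]
        have := (Dmat_psd N).trace_nonneg
        rw [Dmat, Matrix.trace_sub, Matrix.trace_smul, Kmat_trace, smul_eq_mul] at this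
        linarith
      have hkb : ∀ ω, ‖(cx (Kmat N) * Rm (scaledW X N ω) z * (cx (Kmat N) * Rm (scaledW X N ω) z)).trace‖ ≤
          z.im⁻¹ ^ 2 * (2 * π * (N * π)) := fun ω =>
        (Rm_KK (sW_herm X N ω) hz (by ext i j; exact Kmat_symm N j i)).trans (by gcongr)
      have e1 : ∀ ω, (cx (scaledW X N ω) * Rm (scaledW X N ω) z).trace = N * (1 + z * aN X z N ω) := by
        intro ω
        rw [Rm_mul (sW_herm X N ω) hz, Matrix.trace_add, Matrix.trace_one, Matrix.trace_smul, aN]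
        simp only [Fintype.card_fin, smul_eq_mul]
        field_simp
      have e2 : ∀ ω, (cx (Kmat N) * Rm (scaledW X N ω) z).trace ^ 2 = N ^ 2 * tN X z N ω ^ 2 := by
        intro ω
        rw [tN]; field_simp
      have hki : Integrable (fun ω => (cx (Kmat N) * Rm (scaledW X N ω) z * (cx (Kmat N) * Rm (scaledW X N ω) z)).trace) P := by
        have htr : ∀ M : Matrix (Fin N) (Fin N) ℂ, (M * M).trace = ∑ i, ∑ j, M i j * M j i := fun M => by
          simp only [Matrix.trace, Matrix.diag_apply, Matrix.mul_apply]
        simp_rw [htr]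
        exact integrable_finsetSum _ fun i _ => integrable_finsetSum _ fun j _ => KR_int P X hX N hz _ _ _ _
      simp_rw [e1, e2] at hib
      rw [integral_const_mul, integral_add (integrable_const _) ((hai N).const_mul z), integral_const_mul,
        integral_add ((hti2 N).const_mul _) hki, integral_const_mul] at hib
      simp only [integral_const, probReal_univ, one_smul] at hib
      have e3 : (1 + z * ∫ ω, aN X z N ω ∂P) - (-2 * ∫ ω, tN X z N ω ^ 2 ∂P) = -(2 * (N : ℂ)⁻¹ ^ 2) *
        ∫ ω, (cx (Kmat N) * Rm (scaledW X N ω) z * (cx (Kmat N) * Rm (scaledW X N ω) z)).trace ∂P := by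
        have : (1 + z * ∫ ω, aN X z N ω ∂P) = (N : ℂ)⁻¹ * (N * (1 + z * ∫ ω, aN X z N ω ∂P)) := by field_simp
        rw [this, hib]
        field_simp
        ring
      rw [e3, norm_mul]
      have hI : ‖∫ ω, (cx (Kmat N) * Rm (scaledW X N ω) z * (cx (Kmat N) * Rm (scaledW X N ω) z)).trace ∂P‖ ≤ z.im⁻¹ ^ 2 * (2 * π * (N * π)) := by
        have := norm_integral_le_of_norm_le_const (μ := P) (ae_of_all _ hkb)
        simpa using this
      have hn : ‖-(2 * (N : ℂ)⁻¹ ^ 2)‖ = 2 * (N : ℝ)⁻¹ ^ 2 := by simp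
      rw [hn]
      calc _ ≤ 2 * (N : ℝ)⁻¹ ^ 2 * (z.im⁻¹ ^ 2 * (2 * π * (N * π))) := by gcongr
        _ = _ := by field_simp; ring
    have hlim := hL.sub (hEt2.const_mul (-2))
    have := tendsto_nhds_unique hlim hE
    exact sub_eq_zero.1 this
  · have h := (Complex.continuous_im.tendsto T).comp hEt
    refine ge_of_tendsto' h fun N => ?_
    have : (∫ ω, tN X z N ω ∂P).im = ∫ ω, (tN X z N ω).im ∂P := (Complex.imCLM.integral_comp_comm (hti N)).symm
    rw [Function.comp_apply, this]
    exact integral_nonneg fun ω => tN_im X hz N ω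
end

lemma stj_im (x u y : ℝ) : (((x : ℂ) - (u + y * Complex.I))⁻¹).im = y / ((x - u) ^ 2 + y ^ 2) := by
  rw [Complex.inv_im, Complex.normSq_apply]
  simp
  congr 1
  ring

lemma poisson_subst (f : ℝ → ℝ) (x y : ℝ) (hy : 0 < y) :
    ∫ u, f u * (y / ((x - u) ^ 2 + y ^ 2)) = ∫ s, f (x + y * s) * (1 + s ^ 2)⁻¹ := by
  have h1 : ∫ u, f u * (y / ((x - u) ^ 2 + y ^ 2)) = ∫ u, f (x + u) * (y / (u ^ 2 + y ^ 2)) := by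
    rw [← integral_add_left_eq_self _ x]
    congr 1; ext u; congr 2; ring
  have h2 := Measure.integral_comp_mul_left (fun u => f (x + u) * (y / (u ^ 2 + y ^ 2))) y
  rw [h1]
  have h3 : ∫ s, f (x + y * s) * (1 + s ^ 2)⁻¹ = y * ∫ s, f (x + y * s) * (y / ((y * s) ^ 2 + y ^ 2)) := by
    rw [← integral_const_mul]
    congr 1; ext s
    have : 0 < 1 + s ^ 2 := by positivity
    have : 0 < (y * s) ^ 2 + y ^ 2 := by positivity
    field_simp
    ring
  rw [h3, h2, abs_of_pos (by positivity), smul_eq_mul, mul_inv_cancel_left₀ hy.ne']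

lemma poisson_fubini (μ : Measure ℝ) [IsFiniteMeasure μ] (f : ℝ → ℝ) (hf : Continuous f) (hfs : HasCompactSupport f)
    (y : ℝ) (hy : 0 < y) :
    ∫ x, (∫ s, f (x + y * s) * (1 + s ^ 2)⁻¹) ∂μ =
      ∫ u, f u * (∫ x : ℝ, ((x : ℂ) - (u + y * Complex.I))⁻¹ ∂μ).im := by
  have hfi : Integrable f := hf.integrable_of_hasCompactSupport hfs
  simp_rw [← poisson_subst f _ y hy]
  have hc : Continuous (fun p : ℝ × ℝ => y / ((p.1 - p.2) ^ 2 + y ^ 2)) :=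
    continuous_const.div (by fun_prop) fun p => by positivity
  have hi : Integrable (fun p : ℝ × ℝ => f p.2 * (y / ((p.1 - p.2) ^ 2 + y ^ 2))) (μ.prod volume) := by
    refine Integrable.mul_bdd (c := y⁻¹) (hfi.comp_snd μ) hc.aestronglyMeasurable (ae_of_all _ fun p => ?_)
    rw [Real.norm_of_nonneg (by positivity), div_le_iff₀ (by positivity)]
    have : y⁻¹ * ((p.1 - p.2) ^ 2 + y ^ 2) = y⁻¹ * (p.1 - p.2) ^ 2 + y := by field_simp
    rw [this]
    have : 0 ≤ y⁻¹ * (p.1 - p.2) ^ 2 := by positivity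
    linarith
  rw [integral_integral_swap hi]
  congr 1; ext u
  rw [integral_const_mul]
  congr 1
  have hz : 0 < ((u : ℂ) + y * Complex.I).im := by simpa using hy
  have := Complex.imCLM.integral_comp_comm (stj_int hz μ)
  simp only [Complex.imCLM_apply] at this
  rw [← this]
  congr 1; ext x
  exact (stj_im x u y).symm

lemma poisson_lim (μ : Measure ℝ) [IsFiniteMeasure μ] (f : ℝ → ℝ) (hf : Continuous f) (hfs : HasCompactSupport f) :
    Tendsto (fun n : ℕ => ∫ x, (∫ s, f (x + (1 / ((n : ℝ) + 1)) * s) * (1 + s ^ 2)⁻¹) ∂μ) atTop (nhds (∫ x, f x * π ∂μ)) := by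
  obtain ⟨C, hC⟩ := hf.bounded_above_of_compact_support hfs
  have hy := tendsto_one_div_add_atTop_nhds_zero_nat (𝕜 := ℝ)
  have hb : ∀ (x y s : ℝ), ‖f (x + y * s) * (1 + s ^ 2)⁻¹‖ ≤ C * (1 + s ^ 2)⁻¹ := by
    intro x y s
    rw [norm_mul, Real.norm_of_nonneg (by positivity : 0 ≤ (1 + s ^ 2)⁻¹)]
    gcongr
    exact hC _
  have hI := integrable_inv_one_add_sq.const_mul C
  have hcs : Continuous fun s : ℝ => (1 + s ^ 2)⁻¹ := Continuous.inv₀ (by fun_prop) fun s => by positivity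
  refine tendsto_integral_of_dominated_convergence (fun _ => C * π) (fun n => ?_) (integrable_const _) (fun n => ae_of_all _ fun x => ?_) (ae_of_all _ fun x => ?_)
  · have hc : Continuous (fun p : ℝ × ℝ => f (p.1 + (1 / ((n : ℝ) + 1)) * p.2) * (1 + p.2 ^ 2)⁻¹) :=
      (hf.comp (by fun_prop)).mul (hcs.comp continuous_snd)
    exact (hc.stronglyMeasurable.integral_prod_right).aestronglyMeasurable
  · rw [← integral_univ_inv_one_add_sq, ← integral_const_mul]
    exact norm_integral_le_of_norm_le hI (ae_of_all _ fun s => hb _ _ _)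
  · rw [← integral_univ_inv_one_add_sq, ← integral_const_mul]
    refine tendsto_integral_of_dominated_convergence _ (fun n => ?_) hI (fun n => ae_of_all _ fun s => hb _ _ _) (ae_of_all _ fun s => ?_)
    · exact ((hf.comp (by fun_prop)).mul hcs).aestronglyMeasurable
    · refine Tendsto.mul_const _ ?_
      have : Tendsto (fun n : ℕ => x + 1 / ((n : ℝ) + 1) * s) atTop (nhds (x + 0 * s)) := (hy.mul_const s).const_add x
      rw [zero_mul, add_zero] at this
      exact (hf.tendsto x).comp this

lemma stj_unique (μ ν : Measure ℝ) [IsFiniteMeasure μ] [IsFiniteMeasure ν]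
    (h : ∀ z : ℂ, 0 < z.im → ∫ x : ℝ, ((x : ℂ) - z)⁻¹ ∂μ = ∫ x : ℝ, ((x : ℂ) - z)⁻¹ ∂ν) : μ = ν := by
  refine Measure.ext_of_integral_eq_on_compactlySupported fun f => ?_
  have hfc := f.continuous
  have hfs := f.hasCompactSupport
  have h1 := poisson_lim μ f hfc hfs
  have h2 := poisson_lim ν f hfc hfs
  have he : ∀ n : ℕ, ∫ x, (∫ s, f (x + (1 / ((n : ℝ) + 1)) * s) * (1 + s ^ 2)⁻¹) ∂ν =
      ∫ x, (∫ s, f (x + (1 / ((n : ℝ) + 1)) * s) * (1 + s ^ 2)⁻¹) ∂μ := by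
    intro n
    have hy : 0 < 1 / ((n : ℝ) + 1) := by positivity
    rw [poisson_fubini μ f hfc hfs _ hy, poisson_fubini ν f hfc hfs _ hy]
    congr 1; ext u
    rw [h]
    rw [Complex.add_im, Complex.ofReal_im, Complex.im_ofReal_mul, Complex.I_im]
    linarith
  have := tendsto_nhds_unique h1 (h2.congr he)
  rw [integral_mul_const, integral_mul_const] at this
  exact mul_right_cancel₀ pi_ne_zero this

def rho (x : ℝ) : ℝ := (4 * π ^ 2)⁻¹ * Real.sqrt (4 - x ^ 2 / (4 * π ^ 2))

lemma rho_cont : Continuous rho := by unfold rho; fun_prop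
lemma rho_nonneg (x : ℝ) : 0 ≤ rho x := by unfold rho; positivity

lemma sqrt_fourpi : Real.sqrt (4 * π ^ 2) = 2 * π := by
  rw [show 4 * π ^ 2 = (2 * π) ^ 2 by ring, Real.sqrt_sq (by positivity)]

lemma WSL_eq : WSL (4 * π ^ 2) = (volume.restrict (Set.Icc (-(4 * π)) (4 * π))).withDensity (fun x => ENNReal.ofReal (rho x)) := by
  rw [← withDensity_indicator measurableSet_Icc]
  unfold WSL
  congr 1; ext x
  rw [sqrt_fourpi]
  have h : (|x| ≤ 2 * (2 * π)) ↔ x ∈ Set.Icc (-(4 * π)) (4 * π) := by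
    rw [abs_le, Set.mem_Icc]; constructor <;> rintro ⟨a, b⟩ <;> constructor <;> linarith
  by_cases hx : x ∈ Set.Icc (-(4 * π)) (4 * π)
  · rw [if_pos (h.2 hx), Set.indicator_of_mem hx, rho]
    congr 2; ring
  · rw [if_neg (fun h' => hx (h.1 h')), Set.indicator_of_notMem hx]; simp

instance WSL_fin : IsFiniteMeasure (WSL (4 * π ^ 2)) := by
  rw [WSL_eq]
  refine isFiniteMeasure_withDensity_ofReal ?_
  exact (rho_cont.integrableOn_Icc).2

lemma WSL_integral (g : ℝ → ℂ) : ∫ x, g x ∂(WSL (4 * π ^ 2)) = ∫ x in (-(4 * π))..(4 * π), (rho x : ℂ) * g x := by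
  rw [WSL_eq, integral_withDensity_eq_integral_toReal_smul rho_cont.measurable.ennreal_ofReal (ae_of_all _ fun x => ENNReal.ofReal_lt_top),
    intervalIntegral.integral_of_le (by linarith [pi_pos]), integral_Icc_eq_integral_Ioc]
  congr 1; ext x
  rw [ENNReal.toReal_ofReal (rho_nonneg x)]; simp

lemma cos_int (m : ℕ) (hm : m ≠ 0) : ∫ θ in (0 : ℝ)..π, Real.cos (m * θ) = 0 := by
  rw [intervalIntegral.integral_comp_mul_left _ (by exact_mod_cast hm), integral_cos]
  simp

lemma sin_orth (n : ℕ) : ∫ θ in (0 : ℝ)..π, Real.sin ((n + 1) * θ) * Real.sin θ = if n = 0 then π / 2 else 0 := by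
  have h : ∀ θ : ℝ, Real.sin ((n + 1) * θ) * Real.sin θ = (1 / 2) * (Real.cos ((n : ℕ) * θ) - Real.cos ((n + 2 : ℕ) * θ)) := by
    intro θ
    have h1 : ((n : ℕ) : ℝ) * θ = (n + 1) * θ - θ := by ring
    have h2 : ((n + 2 : ℕ) : ℝ) * θ = (n + 1) * θ + θ := by push_cast; ring
    rw [h1, h2, Real.cos_sub, Real.cos_add]; ring
  simp_rw [h]
  rw [intervalIntegral.integral_const_mul, intervalIntegral.integral_sub
    ((by fun_prop : Continuous _).intervalIntegrable _ _) ((by fun_prop : Continuous _).intervalIntegrable _ _),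
    cos_int (n + 2) (by omega)]
  split_ifs with hn
  · subst hn; simp; ring
  · rw [cos_int n hn]; simp

lemma sin_series {q : ℂ} (hq : ‖q‖ < 1) (θ : ℝ) :
    1 - 2 * q * Real.cos θ + q ^ 2 ≠ 0 ∧
    HasSum (fun n : ℕ => q ^ n * (Real.sin ((n + 1) * θ) * Real.sin θ : ℝ)) ((Real.sin θ : ℂ) ^ 2 / (1 - 2 * q * Real.cos θ + q ^ 2)) := by
  set w := Complex.exp (θ * Complex.I) with hw
  set v := Complex.exp (-θ * Complex.I) with hv
  have hwn : ‖w‖ = 1 := Complex.norm_exp_ofReal_mul_I θ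
  have hvn : ‖v‖ = 1 := by
    have := Complex.norm_exp_ofReal_mul_I (-θ)
    rw [hv, ← this]; push_cast; rfl
  have hwv : w * v = 1 := by rw [hw, hv, ← Complex.exp_add]; simp
  have hw1 : ‖q * w‖ < 1 := by rw [norm_mul, hwn, mul_one]; exact hq
  have hv1 : ‖q * v‖ < 1 := by rw [norm_mul, hvn, mul_one]; exact hq
  have hne : ∀ a : ℂ, ‖a‖ < 1 → 1 - a ≠ 0 := by
    intro a ha h
    have : a = 1 := (sub_eq_zero.1 h).symm
    rw [this] at ha; simp at ha
  have hc : (Real.cos θ : ℂ) = (w + v) / 2 := by rw [Complex.ofReal_cos, Complex.cos]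
  have hs : (Real.sin θ : ℂ) = (v - w) * Complex.I / 2 := by rw [Complex.ofReal_sin, Complex.sin]
  have hsn : ∀ n : ℕ, (Real.sin ((n + 1) * θ) : ℂ) = (v ^ (n + 1) - w ^ (n + 1)) * Complex.I / 2 := by
    intro n
    rw [Complex.ofReal_sin, Complex.sin, hw, hv, ← Complex.exp_nat_mul, ← Complex.exp_nat_mul]
    push_cast
    congr 4 <;> ring_nf
  have hD : 1 - 2 * q * Real.cos θ + q ^ 2 = (1 - q * w) * (1 - q * v) := by
    rw [hc]; linear_combination (-q ^ 2) * hwv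
  have n1 := hne _ hw1
  have n2 := hne _ hv1
  refine ⟨by rw [hD]; exact mul_ne_zero n1 n2, ?_⟩
  have h1 := (hasSum_geometric_of_norm_lt_one hw1).mul_left w
  have h2 := (hasSum_geometric_of_norm_lt_one hv1).mul_left v
  have h3 := (h2.sub h1).mul_left (Complex.I / 2 * Real.sin θ)
  have hfun : (fun n : ℕ => q ^ n * ((Real.sin ((n + 1) * θ) * Real.sin θ : ℝ) : ℂ)) =
      fun n : ℕ => Complex.I / 2 * Real.sin θ * (v * (q * v) ^ n - w * (q * w) ^ n) := by
    funext n
    rw [Complex.ofReal_mul, hsn n, mul_pow, mul_pow]; ring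
  have hval : (Real.sin θ : ℂ) ^ 2 / (1 - 2 * q * Real.cos θ + q ^ 2) =
      Complex.I / 2 * Real.sin θ * (v * (1 - q * v)⁻¹ - w * (1 - q * w)⁻¹) := by
    have e : v * (1 - q * v)⁻¹ - w * (1 - q * w)⁻¹ = (v - w) / ((1 - q * w) * (1 - q * v)) := by
      rw [eq_div_iff (mul_ne_zero n1 n2)]
      have e1 := mul_inv_cancel₀ n1
      have e2 := mul_inv_cancel₀ n2
      linear_combination v * (1 - q * w) * e2 - w * (1 - q * v) * e1
    rw [hD, sq, e]
    nth_rewrite 1 [hs]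
    ring
  rw [hfun, hval]
  exact h3

lemma J_eq {q : ℂ} (hq : ‖q‖ < 1) :
    ∫ θ in (0 : ℝ)..π, (Real.sin θ : ℂ) ^ 2 / (1 - 2 * q * Real.cos θ + q ^ 2) = (π : ℂ) / 2 := by
  have h : HasSum (fun n : ℕ => ∫ θ in (0 : ℝ)..π, q ^ n * (Real.sin ((n + 1) * θ) * Real.sin θ : ℝ))
      (∫ θ in (0 : ℝ)..π, (Real.sin θ : ℂ) ^ 2 / (1 - 2 * q * Real.cos θ + q ^ 2)) := by
    refine intervalIntegral.hasSum_integral_of_dominated_convergence (fun n _ => ‖q‖ ^ n) (fun n => ?_) (fun n => ae_of_all _ fun θ _ => ?_)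
      (ae_of_all _ fun θ _ => summable_geometric_of_lt_one (norm_nonneg _) hq) (by simp) (ae_of_all _ fun θ _ => (sin_series hq θ).2)
    · exact Continuous.aestronglyMeasurable (by fun_prop)
    · rw [norm_mul, norm_pow, Complex.norm_real, norm_mul]
      have h1 := Real.abs_sin_le_one ((n + 1) * θ)
      have h2 := Real.abs_sin_le_one θ
      have : |Real.sin ((n + 1) * θ)| * |Real.sin θ| ≤ 1 := mul_le_one₀ h1 (abs_nonneg _) h2
      exact mul_le_of_le_one_right (by positivity) this
  have h2 : HasSum (fun n : ℕ => ∫ θ in (0 : ℝ)..π, q ^ n * (Real.sin ((n + 1) * θ) * Real.sin θ : ℝ)) ((π : ℂ) / 2) := by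
    have e : ∀ n : ℕ, ∫ θ in (0 : ℝ)..π, q ^ n * ((Real.sin ((n + 1) * θ) * Real.sin θ : ℝ) : ℂ) = if n = 0 then (π : ℂ) / 2 else 0 := by
      intro n
      rw [intervalIntegral.integral_const_mul, intervalIntegral.integral_ofReal, sin_orth]
      split_ifs with hn
      · subst hn; simp
      · simp
    simp_rw [e]
    exact hasSum_ite_eq 0 _
  exact h.unique h2

lemma WSL_stj {q z : ℂ} (hq : ‖q‖ < 1) (hq0 : q ≠ 0) (hz : 0 < z.im) (hzq : z = 2 * π * (q + q⁻¹)) :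
    ∫ x : ℝ, ((x : ℂ) - z)⁻¹ ∂(WSL (4 * π ^ 2)) = -q / (2 * π) := by
  rw [WSL_integral]
  have hg : Continuous (fun x : ℝ => (rho x : ℂ) * ((x : ℂ) - z)⁻¹) :=
    (Complex.continuous_ofReal.comp rho_cont).mul (stj_cont hz)
  have hs := intervalIntegral.integral_deriv_smul_comp (a := π) (b := 0) (f := fun θ => 4 * π * Real.cos θ)
    (f' := fun θ => 4 * π * (-Real.sin θ)) (g := fun x : ℝ => (rho x : ℂ) * ((x : ℂ) - z)⁻¹)
    (fun θ _ => (Real.hasDerivAt_cos θ).const_mul _) (by fun_prop) hg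
  simp only [Real.cos_pi, Real.cos_zero, mul_neg, mul_one] at hs
  rw [← hs, intervalIntegral.integral_symm]
  have hpi : (π : ℂ) ≠ 0 := by exact_mod_cast pi_ne_zero
  have e : ∫ θ in (0 : ℝ)..π, (-(4 * π * Real.sin θ)) • ((fun x : ℝ => (rho x : ℂ) * ((x : ℂ) - z)⁻¹) ∘ fun θ => 4 * π * Real.cos θ) θ =
      ∫ θ in (0 : ℝ)..π, (q / π ^ 2) * ((Real.sin θ : ℂ) ^ 2 / (1 - 2 * q * Real.cos θ + q ^ 2)) := by
    refine intervalIntegral.integral_congr fun θ hθ => ?_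
    rw [Set.uIcc_of_le pi_pos.le] at hθ
    have hsin := Real.sin_nonneg_of_mem_Icc hθ
    have hr : rho (4 * π * Real.cos θ) = (4 * π ^ 2)⁻¹ * (2 * Real.sin θ) := by
      unfold rho
      congr 1
      rw [show 4 - (4 * π * Real.cos θ) ^ 2 / (4 * π ^ 2) = (2 * Real.sin θ) ^ 2 by
        rw [mul_pow 2, Real.sin_sq]; field_simp; ring]
      exact Real.sqrt_sq (by positivity)
    have hd := (sin_series hq θ).1
    simp only [Function.comp_apply]
    rw [hr]
    have hx : (((4 * π * Real.cos θ : ℝ) : ℂ) - z) = -(2 * π / q) * (1 - 2 * q * Real.cos θ + q ^ 2) := by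
      rw [hzq]; push_cast; field_simp; ring
    rw [hx, Complex.real_smul]
    push_cast at hd ⊢
    field_simp
  rw [e, intervalIntegral.integral_const_mul, J_eq hq]
  field_simp

lemma alg_root {z T g : ℂ} (hz : 0 < z.im) (h1 : z * T = 2 * π * z * g + π) (h2 : 1 + z * g = -2 * T ^ 2)
    (h3 : 0 ≤ T.im) : ∃ q : ℂ, ‖q‖ < 1 ∧ q ≠ 0 ∧ z = 2 * π * (q + q⁻¹) ∧ g = (1 / 2) * (-z⁻¹) + (1 / 2) * (-q / (2 * π)) := by
  have hpi : (π : ℂ) ≠ 0 := by exact_mod_cast pi_ne_zero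
  have hz0 : z ≠ 0 := by rintro rfl; simp at hz
  have hT0 : T ≠ 0 := by
    rintro rfl
    have : (π : ℂ) = 0 := by linear_combination h1 + 2 * π * h2
    exact hpi this
  have h4 : z * T = -4 * π * T ^ 2 - π := by linear_combination h1 + 2 * π * h2
  have hzq : z = 2 * π * (-2 * T + (-2 * T)⁻¹) := by
    field_simp
    linear_combination h4
  have hq0 : -2 * T ≠ 0 := mul_ne_zero (by norm_num) hT0
  have hqi : (-2 * T).im ≤ 0 := by simp; exact h3
  have hg : z * g = -1 - 2 * T ^ 2 := by linear_combination h2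
  refine ⟨-2 * T, ?_, hq0, hzq, ?_⟩
  · generalize -2 * T = q at *
    have hn : 0 < Complex.normSq q := Complex.normSq_pos.2 hq0
    have hzi : z.im = 2 * π * (q.im * (1 - (Complex.normSq q)⁻¹)) := by
      rw [hzq]
      have : (2 * π * (q + q⁻¹) : ℂ) = ((2 * π : ℝ) : ℂ) * (q + q⁻¹) := by push_cast; ring
      rw [this, Complex.im_ofReal_mul, Complex.add_im, Complex.inv_im]; ring
    rw [hzi] at hz
    have h5 : 0 < q.im * (1 - (Complex.normSq q)⁻¹) := (mul_pos_iff_of_pos_left (by positivity)).1 hz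
    have h6 : 1 - (Complex.normSq q)⁻¹ < 0 := by
      by_contra h
      have := mul_nonpos_of_nonpos_of_nonneg hqi (not_lt.1 h)
      linarith
    have h7 : Complex.normSq q < 1 := by
      by_contra h
      have := inv_le_one_of_one_le₀ (not_lt.1 h)
      linarith
    rw [Complex.normSq_eq_norm_sq] at h7
    have := norm_nonneg q
    nlinarith
  · have : z * g = z * ((1 / 2) * (-z⁻¹) + (1 / 2) * (-(-2 * T) / (2 * π))) := by
      rw [hg]
      field_simp
      linear_combination (-1 : ℂ) * h4
    exact mul_left_cancel₀ hz0 this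

/-- **Example 4.2.** For the density `f = 1_{[-π/2,π/2]²}`, the limiting
spectral distribution is `(1/2) δ₀ + (1/2) WSL(4π²)`; in particular it has an
atom, so it is not a continuous probability measure. -/
theorem statement18 {Ω : Type} [MeasurableSpace Ω] (P : Measure Ω)
    [IsProbabilityMeasure P] (X : ℤ → ℤ → Ω → ℝ)
    (hX : StatGauss P X)
    (hXf : HasSpecDensity P X (fun q =>
      if q.1 ∈ Set.Icc (-(π / 2)) (π / 2) ∧ q.2 ∈ Set.Icc (-(π / 2)) (π / 2)
      then 1 else 0))
    (μf : Measure ℝ) (hμf : IsProbabilityMeasure μf)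
    (hconv : ESDTendstoInProb P (scaledW X) μf) :
    μf = (2⁻¹ : ENNReal) • Measure.dirac (0 : ℝ)
        + (2⁻¹ : ENNReal) • WSL (4 * π ^ 2) ∧
    ∃ t : ℝ, μf {t} ≠ 0 := by
  have h2 : (2⁻¹ : ENNReal) ≠ ⊤ := by simp
  have i1 : IsFiniteMeasure ((2⁻¹ : ENNReal) • Measure.dirac (0 : ℝ)) := Measure.smul_finite _ h2
  have i2 : IsFiniteMeasure ((2⁻¹ : ENNReal) • WSL (4 * π ^ 2)) := Measure.smul_finite _ h2
  have key : μf = (2⁻¹ : ENNReal) • Measure.dirac (0 : ℝ)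
        + (2⁻¹ : ENNReal) • WSL (4 * π ^ 2) := by
    refine stj_unique _ _ fun z hz => ?_
    obtain ⟨T, h1, h2, h3⟩ := limit_eq P X hX hXf μf hconv hz
    obtain ⟨q, hq, hq0, hzq, hg⟩ := alg_root hz h1 h2 h3
    rw [hg, integral_add_measure (stj_int hz _) (stj_int hz _), integral_smul_measure, integral_smul_measure,
      integral_dirac, WSL_stj hq hq0 hz hzq]
    simp
  refine ⟨key, 0, ?_⟩
  rw [key]
  simp

end
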